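/- (Convergence Result 3.) Assume H := H₁ = H₂ is continuous and satisfies (A1) and (A8) (i.e., (A8)⁺ or (A8)⁻ holds), and assume the ergodic constant is 0, i.e., the single-equation ergodic problem H(x, Dv) = 0 in 𝕋^n admits a Lipschitz viscosity solution. Then for any continuous initial data (u₀₁, u₀₂) there exists v ∈ C(𝕋^n) such that (v, v) is a viscosity solution of (E) with c = 0 and the viscosity solution (u₁, u₂) of (C) satisfies u_i(·,t) → v uniformly on 𝕋^n as t → ∞, for i = 1,2. -/

import Mathlib

open MeasureTheory Filter Topology Set

noncomputable section

/-- Euclidean space `ℝ^n`; the torus `𝕋^n` is modelled by `ℤ^n`-periodic functions on it. -/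
abbrev En (n : ℕ) : Type := EuclideanSpace ℝ (Fin n)

/-- The integer vector `k ∈ ℤ^n` viewed as an element of `ℝ^n`. -/
def intVec (n : ℕ) (k : Fin n → ℤ) : En n := WithLp.toLp 2 (fun i => (k i : ℝ))

/-- A `ℤ^n`-periodic function on `ℝ^n`, i.e. a function on the torus `𝕋^n`. -/
def ZPeriodic {n : ℕ} (f : En n → ℝ) : Prop :=
  ∀ (x : En n) (k : Fin n → ℤ), f (x + intVec n k) = f x

/-- A Hamiltonian `H : 𝕋^n × ℝ^n → ℝ` (periodic in the first variable). -/
def ZPeriodicH {n : ℕ} (H : En n → En n → ℝ) : Prop :=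
  ∀ (x : En n) (k : Fin n → ℤ) (p : En n), H (x + intVec n k) p = H x p

/-- A function on `𝕋^n × ℝ` (space-time, periodic in space). -/
def ZPeriodicST {n : ℕ} (u : En n × ℝ → ℝ) : Prop :=
  ∀ (x : En n) (k : Fin n → ℤ) (t : ℝ), u (x + intVec n k, t) = u (x, t)

/-- (A1): coercivity, `lim_{r→∞} inf{H(x,p) : x ∈ 𝕋^n, |p| ≥ r} = ∞`. -/
def Coercive {n : ℕ} (H : En n → En n → ℝ) : Prop :=
  ∀ M : ℝ, ∃ r : ℝ, ∀ (x p : En n), r ≤ ‖p‖ → M ≤ H x p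

/-- Coercivity for an `x`-independent Hamiltonian. -/
def CoerciveP {n : ℕ} (H : En n → ℝ) : Prop :=
  ∀ M : ℝ, ∃ r : ℝ, ∀ p : En n, r ≤ ‖p‖ → M ≤ H p

/-- Lipschitz continuity (membership in `W^{1,∞}`). -/
def IsLip {n : ℕ} (f : En n → ℝ) : Prop := ∃ K : NNReal, LipschitzWith K f

/-- Viscosity subsolution inequality for one stationary equation
`H(x, Dw) + c (w - wo) ≤ ρ(x)` of a weakly coupled system. -/
def StatSubIneq {n : ℕ} (H : En n → En n → ℝ) (c : ℝ) (w wo : En n → ℝ) (ρ : En n → ℝ) : Prop :=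
  ∀ φ : En n → ℝ, ContDiff ℝ 1 φ →
    ∀ x₀ : En n, IsLocalMax (fun x => w x - φ x) x₀ →
      H x₀ (gradient φ x₀) + c * (w x₀ - wo x₀) ≤ ρ x₀

/-- Viscosity supersolution inequality for one stationary equation. -/
def StatSuperIneq {n : ℕ} (H : En n → En n → ℝ) (c : ℝ) (w wo : En n → ℝ) (ρ : En n → ℝ) : Prop :=
  ∀ φ : En n → ℝ, ContDiff ℝ 1 φ →
    ∀ x₀ : En n, IsLocalMin (fun x => w x - φ x) x₀ →
      ρ x₀ ≤ H x₀ (gradient φ x₀) + c * (w x₀ - wo x₀)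

/-- Viscosity subsolution of the stationary system
`Hᵢ(x, Dwᵢ) + cᵢ (wᵢ - wⱼ) = ρᵢ(x)`, `i = 1,2`. -/
def CellSub {n : ℕ} (H₁ H₂ : En n → En n → ℝ) (c₁ c₂ : ℝ) (w₁ w₂ : En n → ℝ)
    (ρ₁ ρ₂ : En n → ℝ) : Prop :=
  StatSubIneq H₁ c₁ w₁ w₂ ρ₁ ∧ StatSubIneq H₂ c₂ w₂ w₁ ρ₂

/-- Viscosity supersolution of the stationary system. -/
def CellSuper {n : ℕ} (H₁ H₂ : En n → En n → ℝ) (c₁ c₂ : ℝ) (w₁ w₂ : En n → ℝ)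
    (ρ₁ ρ₂ : En n → ℝ) : Prop :=
  StatSuperIneq H₁ c₁ w₁ w₂ ρ₁ ∧ StatSuperIneq H₂ c₂ w₂ w₁ ρ₂

/-- Viscosity solution (continuous, sub- and supersolution) of the stationary system. -/
def CellSolution {n : ℕ} (H₁ H₂ : En n → En n → ℝ) (c₁ c₂ : ℝ) (v₁ v₂ : En n → ℝ)
    (ρ₁ ρ₂ : En n → ℝ) : Prop :=
  Continuous v₁ ∧ Continuous v₂ ∧
    CellSub H₁ H₂ c₁ c₂ v₁ v₂ ρ₁ ρ₂ ∧ CellSuper H₁ H₂ c₁ c₂ v₁ v₂ ρ₁ ρ₂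

/-- Subsolution of the ergodic problem (E) with constant `c` (coupling constants 1). -/
def ErgSub {n : ℕ} (H₁ H₂ : En n → En n → ℝ) (v₁ v₂ : En n → ℝ) (c : ℝ) : Prop :=
  CellSub H₁ H₂ 1 1 v₁ v₂ (fun _ => c) (fun _ => c)

/-- Supersolution of the ergodic problem (E). -/
def ErgSuper {n : ℕ} (H₁ H₂ : En n → En n → ℝ) (v₁ v₂ : En n → ℝ) (c : ℝ) : Prop :=
  CellSuper H₁ H₂ 1 1 v₁ v₂ (fun _ => c) (fun _ => c)

/-- Viscosity solution of the ergodic problem (E):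
`H₁(x,Dv₁) + v₁ - v₂ = c`, `H₂(x,Dv₂) + v₂ - v₁ = c` on `𝕋^n`. -/
def ErgSolution {n : ℕ} (H₁ H₂ : En n → En n → ℝ) (v₁ v₂ : En n → ℝ) (c : ℝ) : Prop :=
  CellSolution H₁ H₂ 1 1 v₁ v₂ (fun _ => c) (fun _ => c)

/-- Viscosity subsolution inequality for one evolution equation
`∂ₜ u + H(x, Du) + u - uo ≤ 0` in `𝕋^n × (0,∞)`. -/
def EvolSubIneq {n : ℕ} (H : En n → En n → ℝ) (u uo : En n × ℝ → ℝ) : Prop :=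
  ∀ φ : En n × ℝ → ℝ, ContDiff ℝ 1 φ →
    ∀ (x₀ : En n) (t₀ : ℝ), 0 < t₀ →
      IsLocalMax (fun q => u q - φ q) (x₀, t₀) →
      fderiv ℝ φ (x₀, t₀) (0, 1) + H x₀ (gradient (fun y => φ (y, t₀)) x₀)
        + u (x₀, t₀) - uo (x₀, t₀) ≤ 0

/-- Viscosity supersolution inequality for one evolution equation. -/
def EvolSuperIneq {n : ℕ} (H : En n → En n → ℝ) (u uo : En n × ℝ → ℝ) : Prop :=
  ∀ φ : En n × ℝ → ℝ, ContDiff ℝ 1 φ →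
    ∀ (x₀ : En n) (t₀ : ℝ), 0 < t₀ →
      IsLocalMin (fun q => u q - φ q) (x₀, t₀) →
      0 ≤ fderiv ℝ φ (x₀, t₀) (0, 1) + H x₀ (gradient (fun y => φ (y, t₀)) x₀)
        + u (x₀, t₀) - uo (x₀, t₀)

/-- Viscosity subsolution of system (C) (with coupling constants `c₁ = c₂ = 1`). -/
def SysSub {n : ℕ} (H₁ H₂ : En n → En n → ℝ) (u₁ u₂ : En n × ℝ → ℝ) : Prop :=
  EvolSubIneq H₁ u₁ u₂ ∧ EvolSubIneq H₂ u₂ u₁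

/-- Viscosity supersolution of system (C). -/
def SysSuper {n : ℕ} (H₁ H₂ : En n → En n → ℝ) (u₁ u₂ : En n × ℝ → ℝ) : Prop :=
  EvolSuperIneq H₁ u₁ u₂ ∧ EvolSuperIneq H₂ u₂ u₁

/-- Viscosity solution of the Cauchy problem (C): continuous on `𝕋^n × [0,∞)`,
sub- and supersolution, attaining the initial data. -/
def SysSolution {n : ℕ} (H₁ H₂ : En n → En n → ℝ) (u₀₁ u₀₂ : En n → ℝ)
    (u₁ u₂ : En n × ℝ → ℝ) : Prop :=
  ContinuousOn u₁ {q : En n × ℝ | 0 ≤ q.2} ∧ ContinuousOn u₂ {q : En n × ℝ | 0 ≤ q.2} ∧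
    SysSub H₁ H₂ u₁ u₂ ∧ SysSuper H₁ H₂ u₁ u₂ ∧
    (∀ x, u₁ (x, 0) = u₀₁ x) ∧ (∀ x, u₂ (x, 0) = u₀₂ x)

/-- Viscosity subsolution of the single stationary equation `H(x,Dv) ≤ c` on `𝕋^n`. -/
def SingleSub {n : ℕ} (H : En n → En n → ℝ) (v : En n → ℝ) (c : ℝ) : Prop :=
  ∀ φ : En n → ℝ, ContDiff ℝ 1 φ →
    ∀ x₀ : En n, IsLocalMax (fun x => v x - φ x) x₀ → H x₀ (gradient φ x₀) ≤ c

/-- Viscosity supersolution of the single stationary equation `H(x,Dv) ≥ c` on `𝕋^n`. -/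
def SingleSuper {n : ℕ} (H : En n → En n → ℝ) (v : En n → ℝ) (c : ℝ) : Prop :=
  ∀ φ : En n → ℝ, ContDiff ℝ 1 φ →
    ∀ x₀ : En n, IsLocalMin (fun x => v x - φ x) x₀ → c ≤ H x₀ (gradient φ x₀)

/-- Viscosity solution of the single stationary equation `H(x,Dv) = c` on `𝕋^n`. -/
def SingleSolution {n : ℕ} (H : En n → En n → ℝ) (v : En n → ℝ) (c : ℝ) : Prop :=
  Continuous v ∧ SingleSub H v c ∧ SingleSuper H v c

/-- Uniform convergence `u(·,t) → v` on `𝕋^n` as `t → ∞`. -/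
def UnifTendsTo {n : ℕ} (u : En n × ℝ → ℝ) (v : En n → ℝ) : Prop :=
  ∀ ε : ℝ, 0 < ε → ∃ T : ℝ, ∀ t : ℝ, T ≤ t → ∀ x : En n, |u (x, t) - v x| ≤ ε

/-- (A8)⁺ at level `η` with constant `ψ`. -/
def A8plusAt {n : ℕ} (H : En n → En n → ℝ) (η ψ : ℝ) : Prop :=
  ∀ (x p q : En n), η ≤ H x (p + q) → H x q ≤ 0 →
    ∀ μ : ℝ, 0 < μ → μ ≤ 1 → H x (p + q) + ψ * (1 - μ) ≤ μ * H x (μ⁻¹ • p + q)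

/-- (A8)⁻ at level `η` with constant `ψ`. -/
def A8minusAt {n : ℕ} (H : En n → En n → ℝ) (η ψ : ℝ) : Prop :=
  ∀ (x p q : En n), H x (p + q) ≤ -η → 0 ≤ H x q →
    ∀ μ : ℝ, 1 ≤ μ → μ * H x (μ⁻¹ • p + q) ≤ H x (p + q) - ψ * (μ - 1) / μ

/-- (A8)⁺ with threshold `η₀`. -/
def A8plus {n : ℕ} (H : En n → En n → ℝ) (η₀ : ℝ) : Prop :=
  ∀ η : ℝ, 0 < η → η ≤ η₀ → ∃ ψ : ℝ, 0 < ψ ∧ A8plusAt H η ψ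

/-- (A8)⁻ with threshold `η₀`. -/
def A8minus {n : ℕ} (H : En n → En n → ℝ) (η₀ : ℝ) : Prop :=
  ∀ η : ℝ, 0 < η → η ≤ η₀ → ∃ ψ : ℝ, 0 < ψ ∧ A8minusAt H η ψ

/-- The function `F` of the Key Lemma: `F(r) = C r` for `r ≥ 0`, `F(r) = r / C` for `r < 0`. -/
def Fc (C r : ℝ) : ℝ := if 0 ≤ r then C * r else r / C

/-- `α_η⁺(s)` (resp. `β_η⁺(s)` with `u = u₂`):
`min_{x ∈ 𝕋^n, t ≥ s} (u(x,t) - v(x) + η (t-s)) / (u(x,s) - v(x))`. -/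
def alphaPlus {n : ℕ} (u : En n × ℝ → ℝ) (v : En n → ℝ) (η s : ℝ) : ℝ :=
  sInf {r : ℝ | ∃ (x : En n) (t : ℝ), s ≤ t ∧
    r = (u (x, t) - v x + η * (t - s)) / (u (x, s) - v x)}

/-- `α_η⁻(s)` (resp. `β_η⁻(s)` with `u = u₂`):
`max_{x ∈ 𝕋^n, t ≥ s} (u(x,t) - v(x) - η (t-s)) / (u(x,s) - v(x))`. -/
def alphaMinus {n : ℕ} (u : En n × ℝ → ℝ) (v : En n → ℝ) (η s : ℝ) : ℝ :=
  sSup {r : ℝ | ∃ (x : En n) (t : ℝ), s ≤ t ∧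
    r = (u (x, t) - v x - η * (t - s)) / (u (x, s) - v x)}

/-- (A9)⁺. -/
def A9plus {n : ℕ} (H : En n → En n → ℝ) : Prop :=
  ∃ K : Set (En n), IsClosed K ∧ (∀ x ∈ K, ∀ k : Fin n → ℤ, x + intVec n k ∈ K) ∧
    (∀ x ∈ K, (∀ p : En n, 0 ≤ H x p) ∧ ∃ p : En n, H x p = 0) ∧
    (∀ ε : ℝ, 0 < ε → ∃ η₀ : ℝ, 0 < η₀ ∧ ∃ ψ : ℝ → ℝ, (∀ r : ℝ, 0 < r → 0 < ψ r) ∧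
      ∀ η : ℝ, 0 < η → η ≤ η₀ → ∀ (x p q : En n), ε ≤ Metric.infDist x K →
        η ≤ H x (p + q) → H x q ≤ 0 →
        ∀ μ : ℝ, 0 < μ → μ ≤ 1 → H x (p + q) + ψ η * (1 - μ) ≤ μ * H x (μ⁻¹ • p + q))

/-- (A9)⁻. -/
def A9minus {n : ℕ} (H : En n → En n → ℝ) : Prop :=
  ∃ K : Set (En n), IsClosed K ∧ (∀ x ∈ K, ∀ k : Fin n → ℤ, x + intVec n k ∈ K) ∧
    (∀ x ∈ K, (∀ p : En n, 0 ≤ H x p) ∧ ∃ p : En n, H x p = 0) ∧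
    (∀ ε : ℝ, 0 < ε → ∃ η₀ : ℝ, 0 < η₀ ∧ ∃ ψ : ℝ → ℝ, (∀ r : ℝ, 0 < r → 0 < ψ r) ∧
      ∀ η : ℝ, 0 < η → η ≤ η₀ → ∀ (x p q : En n), ε ≤ Metric.infDist x K →
        H x (p + q) ≤ -η → 0 ≤ H x q →
        ∀ μ : ℝ, 1 ≤ μ → μ * H x (μ⁻¹ • p + q) ≤ H x (p + q) - ψ η * (μ - 1) / μ)

/-- (A6): uniform convexity of an `x`-independent Hamiltonian. -/
def UnifConvex {n : ℕ} (H : En n → ℝ) : Prop :=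
  ∃ α : ℝ, 0 < α ∧ ∀ᵐ q : En n ∂volume, DifferentiableAt ℝ H q ∧
    ∀ p : En n, H q + fderiv ℝ H q (p - q) + α * ‖p - q‖ ^ 2 ≤ H p

end

/-!
Comparison for `∂ₜ u + H(x, Du) = f` (doubling of variables) shows that `u₁ - u₂` decays like
`e^{-2t}`, so `u := u₁` solves the scalar equation up to an error `± C e^{-2t}`. Comparing `u` with
a stationary solution bounds it, comparing it with its own time translates makes the flow
asymptotically nonexpansive, and coercivity then gives asymptotic equicontinuity in space.

Under (A8)⁺, `u` is asymptotically nondecreasing in time. For a stationary subsolution `w` with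
`u - w ≥ 1`, doubling in both time variables gives
`μ(s) (u(x,s) - w(x)) ≤ u(x,t) - w(x) + η (t - s)` for `s ≤ t`, where `μ` is a logistic function
increasing to `1`. Under (A8)⁻, letting `μ → ∞` and
using coercivity forces `H ≥ 0`, so that `u` is asymptotically nonincreasing.

The limits `U(·, h)` of the translates `u(·, k + h)` along an ultrafilter `k → ∞` are therefore
monotone in `h`, hence converge as `h → ∞`. Nonexpansiveness transfers the convergence to `u`, and
stability of viscosity solutions shows that the limit solves `H(x, Dv) = 0`.
-/

/-! ### Calculus in space-time -/

section Calculus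

variable {F : Type*} [NormedAddCommGroup F] [InnerProductSpace ℝ F] [CompleteSpace F]

lemma gradient_neg (φ : F → ℝ) (x : F) : gradient (-φ) x = -gradient φ x := by
  simp only [gradient, fderiv_neg, map_neg]

lemma continuous_gradient {φ : F → ℝ} (hφ : ContDiff ℝ 1 φ) : Continuous (gradient φ) :=
  (InnerProductSpace.toDual ℝ F).symm.continuous.comp (hφ.continuous_fderiv one_ne_zero)

lemma hasGradientAt_const_mul_norm_sub_sq (k : ℝ) (y x : F) :
    HasGradientAt (fun z => k * ‖z - y‖ ^ 2) ((2 * k) • (x - y)) x := by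
  rw [hasGradientAt_iff_hasFDerivAt]
  have h : HasFDerivAt (fun z : F => k * ‖z - y‖ ^ 2) _ x :=
    (((hasFDerivAt_id x).sub_const y).norm_sq).const_mul k
  refine h.congr_fderiv ?_
  ext v
  simp only [id_eq, map_sub, ContinuousLinearMap.comp_id, smul_apply, sub_apply,
    coe_innerSL_apply, nsmul_eq_mul, Nat.cast_ofNat, smul_eq_mul, map_smul,
    InnerProductSpace.toDual_apply_apply]
  ring

lemma hasGradientAt_add {φ ψ : F → ℝ} {p q x : F} (hφ : HasGradientAt φ p x)
    (hψ : HasGradientAt ψ q x) : HasGradientAt (fun z => φ z + ψ z) (p + q) x := by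
  rw [hasGradientAt_iff_hasFDerivAt] at *
  exact (hφ.add hψ).congr_fderiv (map_add _ _ _).symm

lemma hasGradientAt_const_mul {φ : F → ℝ} {p x : F} (c : ℝ) (hφ : HasGradientAt φ p x) :
    HasGradientAt (fun z => c * φ z) (c • p) x := by
  rw [hasGradientAt_iff_hasFDerivAt] at *
  refine (hφ.const_mul c).congr_fderiv ?_
  ext v
  simp

lemma hasGradientAt_const_add {φ : F → ℝ} {p x : F} (c : ℝ) (hφ : HasGradientAt φ p x) :
    HasGradientAt (fun z => c + φ z) p x := by
  rw [hasGradientAt_iff_hasFDerivAt] at *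
  exact hφ.const_add c

end Calculus

section TimeDerivative

variable {E : Type*} [NormedAddCommGroup E] [NormedSpace ℝ E] {φ : E × ℝ → ℝ}

lemma hasDerivAt_time (hφ : ContDiff ℝ 1 φ) (x : E) (t : ℝ) :
    HasDerivAt (fun τ => φ (x, τ)) (fderiv ℝ φ (x, t) (0, 1)) t :=
  (hφ.differentiable one_ne_zero (x, t)).hasFDerivAt.comp_hasDerivAt t
    ((hasDerivAt_const t x).prodMk (hasDerivAt_id t))

lemma fderiv_time_eq_zero_of_isLocalMax (hφ : ContDiff ℝ 1 φ) {w : E → ℝ} {x : E} {t : ℝ}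
    (hmax : IsLocalMax (fun q : E × ℝ => w q.1 - φ q) (x, t)) :
    fderiv ℝ φ (x, t) (0, 1) = 0 := by
  have hmin : IsLocalMin (fun τ => φ (x, τ)) t := by
    filter_upwards [(Continuous.prodMk_right x).continuousAt.eventually hmax] with τ hτ
    linarith
  exact hmin.hasDerivAt_eq_zero (hasDerivAt_time hφ x t)

end TimeDerivative

lemma exists_isMaxOn_cylinder {E : Type*} [PseudoMetricSpace E] [ProperSpace E]
    {Φ : E × ℝ → ℝ} (hΦ : Continuous Φ) (x : E) (t : ℝ) {r δ : ℝ} (hr : 0 ≤ r) (hδ : 0 ≤ δ) :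
    ∃ z τ, dist z x ≤ r ∧ |τ - t| ≤ δ ∧
      ∀ y s, dist y x ≤ r → |s - t| ≤ δ → Φ (y, s) ≤ Φ (z, τ) := by
  obtain ⟨⟨z, τ⟩, ⟨hz, hτ⟩, hmax⟩ :=
    ((isCompact_closedBall x r).prod (isCompact_closedBall t δ)).exists_isMaxOn
      ⟨(x, t), Metric.mem_closedBall_self hr, Metric.mem_closedBall_self hδ⟩ hΦ.continuousOn
  exact ⟨z, τ, hz, hτ, fun y s hy hs => hmax (Set.mk_mem_prod hy hs)⟩

lemma isLocalMax_of_cylinder {E : Type*} [PseudoMetricSpace E] {Φ : E × ℝ → ℝ} {x z : E}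
    {t τ r δ : ℝ} (hz : dist z x < r) (hτ : |τ - t| < δ)
    (hmax : ∀ y s, dist y x ≤ r → |s - t| ≤ δ → Φ (y, s) ≤ Φ (z, τ)) :
    IsLocalMax Φ (z, τ) := by
  have hopen : IsOpen {q : E × ℝ | dist q.1 x < r ∧ |q.2 - t| < δ} :=
    (Metric.isOpen_ball.preimage continuous_fst).inter
      (Metric.isOpen_ball.preimage continuous_snd)
  filter_upwards [hopen.mem_nhds ⟨hz, hτ⟩] with q hq
  exact hmax q.1 q.2 hq.1.le hq.2.le

/-! ### Forced sub- and supersolutions -/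

section Forced

variable {n : ℕ} {H : En n → En n → ℝ} {u v f g : En n × ℝ → ℝ} {x : En n} {t : ℝ}

/-- Viscosity subsolutions of the scalar Cauchy equation `∂ₜ u + H(x, Du) = f` with a forcing
term, in `ℝⁿ × (0, ∞)`. -/
def ForcedSub {n : ℕ} (H : En n → En n → ℝ) (u f : En n × ℝ → ℝ) : Prop :=
  ∀ φ : En n × ℝ → ℝ, ContDiff ℝ 1 φ → ∀ (x : En n) (t : ℝ), 0 < t →
    IsLocalMax (fun q => u q - φ q) (x, t) →
    fderiv ℝ φ (x, t) (0, 1) + H x (gradient (fun y => φ (y, t)) x) ≤ f (x, t)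

/-- Viscosity supersolutions of `∂ₜ u + H(x, Du) = f` in `ℝⁿ × (0, ∞)`. -/
def ForcedSuper {n : ℕ} (H : En n → En n → ℝ) (u f : En n × ℝ → ℝ) : Prop :=
  ∀ φ : En n × ℝ → ℝ, ContDiff ℝ 1 φ → ∀ (x : En n) (t : ℝ), 0 < t →
    IsLocalMin (fun q => u q - φ q) (x, t) →
    f (x, t) ≤ fderiv ℝ φ (x, t) (0, 1) + H x (gradient (fun y => φ (y, t)) x)

/-- The Hamiltonian `-H(x, -p)` of the equation satisfied by `-u` when `u` solves the one with
Hamiltonian `H`; passing to it exchanges sub- and supersolutions. -/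
def dualHamiltonian {n : ℕ} (H : En n → En n → ℝ) : En n → En n → ℝ := fun x p => -H x (-p)

lemma forcedSuper_iff_forcedSub_dual :
    ForcedSuper H u f ↔ ForcedSub (dualHamiltonian H) (-u) (-f) := by
  constructor <;> intro h φ hφ x t ht hext <;>
  · have key := h (-φ) hφ.neg x t ht (hext.neg.congr
      (Eventually.of_forall fun q => by simp only [Pi.neg_apply]; ring))
    have hgrad : gradient (fun y => (-φ) (y, t)) x = -gradient (fun y => φ (y, t)) x :=
      gradient_neg (fun y => φ (y, t)) x
    simp only [hgrad, fderiv_neg, neg_apply, dualHamiltonian, neg_neg] at key ⊢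
    simp only [Pi.neg_apply] at key ⊢
    linarith

lemma singleSuper_iff_singleSub_dual {w : En n → ℝ} {c : ℝ} :
    SingleSuper H w c ↔ SingleSub (dualHamiltonian H) (-w) (-c) := by
  constructor <;> intro h φ hφ x hext <;>
  · have key := h (-φ) hφ.neg x (hext.neg.congr
      (Eventually.of_forall fun q => by simp only [Pi.neg_apply]; ring))
    simp only [gradient_neg, dualHamiltonian, neg_neg] at key ⊢
    linarith

lemma ForcedSub.test (hu : ForcedSub H u f) {φ : En n × ℝ → ℝ} (hφ : ContDiff ℝ 1 φ)
    (ht : 0 < t) (hmax : IsLocalMax (fun q => u q - φ q) (x, t)) {d : ℝ} {p : En n}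
    (hd : HasDerivAt (fun τ => φ (x, τ)) d t) (hp : HasGradientAt (fun y => φ (y, t)) p x) :
    d + H x p ≤ f (x, t) := by
  have key := hu φ hφ x t ht hmax
  rwa [(hasDerivAt_time hφ x t).unique hd, hp.gradient] at key

lemma ForcedSuper.test (hu : ForcedSuper H u f) {φ : En n × ℝ → ℝ} (hφ : ContDiff ℝ 1 φ)
    (ht : 0 < t) (hmin : IsLocalMin (fun q => u q - φ q) (x, t)) {d : ℝ} {p : En n}
    (hd : HasDerivAt (fun τ => φ (x, τ)) d t) (hp : HasGradientAt (fun y => φ (y, t)) p x) :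
    f (x, t) ≤ d + H x p := by
  have key := hu φ hφ x t ht hmin
  rwa [(hasDerivAt_time hφ x t).unique hd, hp.gradient] at key

lemma ForcedSub.translate (hu : ForcedSub H u f) {h : ℝ} (hh : 0 ≤ h) :
    ForcedSub H (fun q => u (q.1, q.2 + h)) (fun q => f (q.1, q.2 + h)) := by
  intro φ hφ x t ht hmax
  have hback : Tendsto (fun q : En n × ℝ => (q.1, q.2 - h)) (𝓝 (x, t + h)) (𝓝 (x, t)) := by
    have hcont : Continuous fun q : En n × ℝ => (q.1, q.2 - h) := by fun_prop
    simpa only [add_sub_cancel_right] using hcont.tendsto (x, t + h)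
  refine hu.test (φ := fun q => φ (q.1, q.2 - h)) (by fun_prop) (by positivity) ?_ ?_ ?_
  · filter_upwards [hback.eventually hmax] with q hq
    simpa only [sub_add_cancel, add_sub_cancel_right] using hq
  · have hd := hasDerivAt_time hφ x t
    rw [← add_sub_cancel_right t h] at hd
    simpa only [add_sub_cancel_right] using hd.comp_sub_const (t + h) h
  · have hdiff : DifferentiableAt ℝ (fun y => φ (y, t)) x :=
      ((hφ.comp (contDiff_prodMk_left t)).differentiable one_ne_zero) x
    simpa only [add_sub_cancel_right] using hdiff.hasGradientAt

lemma ForcedSuper.translate (hu : ForcedSuper H u f) {h : ℝ} (hh : 0 ≤ h) :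
    ForcedSuper H (fun q => u (q.1, q.2 + h)) (fun q => f (q.1, q.2 + h)) :=
  forcedSuper_iff_forcedSub_dual.2 ((forcedSuper_iff_forcedSub_dual.1 hu).translate hh)

lemma ForcedSub.mono (hu : ForcedSub H u f) (hfg : ∀ x t, 0 < t → f (x, t) ≤ g (x, t)) :
    ForcedSub H u g :=
  fun φ hφ x t ht hmax => (hu φ hφ x t ht hmax).trans (hfg x t ht)

lemma ForcedSuper.mono (hu : ForcedSuper H u f) (hfg : ∀ x t, 0 < t → g (x, t) ≤ f (x, t)) :
    ForcedSuper H u g :=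
  fun φ hφ x t ht hmin => (hfg x t ht).trans (hu φ hφ x t ht hmin)

lemma ForcedSub.congr (hu : ForcedSub H u f) (huv : ∀ x t, 0 < t → u (x, t) = v (x, t)) :
    ForcedSub H v f := by
  intro φ hφ x t ht hmax
  have hpos : ∀ᶠ q : En n × ℝ in 𝓝 (x, t), 0 < q.2 :=
    continuous_snd.continuousAt.eventually (lt_mem_nhds ht)
  refine hu φ hφ x t ht (hmax.congr ?_)
  filter_upwards [hpos] with q hq
  rw [← huv q.1 q.2 hq]

lemma ForcedSuper.congr (hu : ForcedSuper H u f) (huv : ∀ x t, 0 < t → u (x, t) = v (x, t)) :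
    ForcedSuper H v f :=
  forcedSuper_iff_forcedSub_dual.2 ((forcedSuper_iff_forcedSub_dual.1 hu).congr
    fun x t ht => congrArg Neg.neg (huv x t ht))

lemma SingleSub.forcedSub {w : En n → ℝ} {c : ℝ} (hw : SingleSub H w c) :
    ForcedSub H (fun q => w q.1) fun _ => c := by
  intro φ hφ x t _ hmax
  rw [fderiv_time_eq_zero_of_isLocalMax hφ hmax, zero_add]
  exact hw _ (by fun_prop) x ((Continuous.prodMk_left t).continuousAt.eventually hmax)

lemma SingleSuper.forcedSuper {w : En n → ℝ} {c : ℝ} (hw : SingleSuper H w c) :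
    ForcedSuper H (fun q => w q.1) fun _ => c :=
  forcedSuper_iff_forcedSub_dual.2 (singleSuper_iff_singleSub_dual.1 hw).forcedSub

lemma EvolSubIneq.forcedSub (hu : EvolSubIneq H u v) : ForcedSub H u fun q => v q - u q := by
  intro φ hφ x t ht hmax
  linarith [hu φ hφ x t ht hmax]

lemma EvolSuperIneq.forcedSuper (hu : EvolSuperIneq H u v) :
    ForcedSuper H u fun q => v q - u q := by
  intro φ hφ x t ht hmin
  linarith [hu φ hφ x t ht hmin]

end Forced

/-! ### Periodicity, coercivity and limits along ultrafilters -/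

section Compactness

lemma exists_norm_add_intVec_le {n : ℕ} (x : En n) :
    ∃ k : Fin n → ℤ, ‖x + intVec n k‖ ≤ √n := by
  refine ⟨fun i => -⌊x i⌋, ?_⟩
  have hfract (i : Fin n) : (x + intVec n fun i => -⌊x i⌋) i = Int.fract (x i) := by
    simp only [intVec, PiLp.add_apply, Int.cast_neg, Int.fract, sub_eq_add_neg]
  have hle (i : Fin n) : ‖(x + intVec n fun i => -⌊x i⌋) i‖ ^ 2 ≤ 1 := by
    rw [hfract, Real.norm_of_nonneg (Int.fract_nonneg _)]
    exact pow_le_one₀ (Int.fract_nonneg _) (Int.fract_lt_one _).le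
  rw [EuclideanSpace.norm_eq]
  refine Real.sqrt_le_sqrt ((Finset.sum_le_sum fun i _ => hle i).trans_eq ?_)
  simp

lemma ZPeriodicST.exists_abs_le {n : ℕ} {u : En n × ℝ → ℝ} (hper : ZPeriodicST u)
    (hu : Continuous u) (T : ℝ) : ∃ M, ∀ x, ∀ t ∈ Icc 0 T, |u (x, t)| ≤ M := by
  obtain ⟨M, hM⟩ := ((isCompact_closedBall (0 : En n) (√n)).prod
    (isCompact_Icc (a := 0) (b := T))).exists_bound_of_continuousOn hu.continuousOn
  refine ⟨M, fun x t ht => ?_⟩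
  obtain ⟨k, hk⟩ := exists_norm_add_intVec_le x
  rw [← hper x k t]
  exact hM _ ⟨by simpa using hk, ht⟩

lemma ZPeriodic.exists_abs_le {n : ℕ} {w : En n → ℝ} (hper : ZPeriodic w) (hw : Continuous w) :
    ∃ M, ∀ x, |w x| ≤ M := by
  obtain ⟨M, hM⟩ := ZPeriodicST.exists_abs_le (u := fun q => w q.1) (fun x k _ => hper x k)
    (by fun_prop) 0
  exact ⟨M, fun x => hM x 0 ⟨le_rfl, le_rfl⟩⟩

lemma Coercive.exists_norm_le {n : ℕ} {H : En n → En n → ℝ} (hH : Coercive H) (M : ℝ) :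
    ∃ r, ∀ x p, H x p ≤ M → ‖p‖ ≤ r := by
  obtain ⟨r, hr⟩ := hH (M + 1)
  refine ⟨r, fun x p hp => ?_⟩
  by_contra! hlt
  linarith [hr x p hlt.le]

lemma exists_tendsto_ultrafilter {ι X : Type*} [TopologicalSpace X] (l : Ultrafilter ι)
    {K : Set X} (hK : IsCompact K) {u : ι → X} (hu : ∀ᶠ i in (l : Filter ι), u i ∈ K) :
    ∃ x ∈ K, Tendsto u l (𝓝 x) :=
  hK.ultrafilter_le_nhds (l.map u) (le_principal_iff.2 hu)

lemma exists_tendsto_ultrafilter_of_norm_le {ι F : Type*} [NormedAddCommGroup F] [ProperSpace F]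
    (l : Ultrafilter ι) {u : ι → F} {R : ℝ} (hu : ∀ᶠ i in (l : Filter ι), ‖u i‖ ≤ R) :
    ∃ x, ‖x‖ ≤ R ∧ Tendsto u l (𝓝 x) := by
  obtain ⟨x, hx, hlim⟩ := exists_tendsto_ultrafilter l (isCompact_closedBall (0 : F) R)
    (hu.mono fun i hi => mem_closedBall_zero_iff.2 hi)
  exact ⟨x, mem_closedBall_zero_iff.1 hx, hlim⟩

lemma tendsto_zero_of_natCast_mul_le {l : Filter ℕ} (hl : l ≤ atTop) {r : ℕ → ℝ} {M : ℝ}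
    (hr : ∀ k, 0 ≤ r k) (hM : ∀ᶠ k : ℕ in l, k * r k ≤ M) : Tendsto r l (𝓝 0) := by
  refine squeeze_zero' (Eventually.of_forall hr) ?_
    ((tendsto_const_div_atTop_nhds_zero_nat M).mono_left hl)
  filter_upwards [hM, hl (eventually_gt_atTop 0)] with k hk hpos
  rwa [le_div_iff₀' (Nat.cast_pos.2 hpos)]

end Compactness

/-! ### Doubling of variables -/

section QuadraticTest

variable {n : ℕ} {H : En n → En n → ℝ} {u f : En n × ℝ → ℝ} {x y : En n} {t k : ℝ}

lemma ForcedSub.test_weighted_quadratic (hu : ForcedSub H u f) {α N : ℝ → ℝ} {N' : ℝ}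
    (hα : ContDiff ℝ 1 α) (hα₀ : ∀ τ, 0 < α τ) (hN : ContDiff ℝ 1 N) (hN' : HasDerivAt N N' t)
    (ht : 0 < t) (htouch : α t * u (x, t) = N t + k * ‖x - y‖ ^ 2)
    (hle : ∀ᶠ q : En n × ℝ in 𝓝 (x, t), α q.2 * u q ≤ N q.2 + k * ‖q.1 - y‖ ^ 2) :
    N' - deriv α t * u (x, t) + α t * H x ((α t)⁻¹ • (2 * k) • (x - y)) ≤ α t * f (x, t) := by
  have hφ : ContDiff ℝ 1 fun q : En n × ℝ => (N q.2 + k * ‖q.1 - y‖ ^ 2) / α q.2 :=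
    ((hN.comp contDiff_snd).add (contDiff_const.mul ((contDiff_fst.sub contDiff_const).norm_sq ℝ))
      ).div (hα.comp contDiff_snd) fun q => (hα₀ q.2).ne'
  have hmax : IsLocalMax (fun q => u q - (N q.2 + k * ‖q.1 - y‖ ^ 2) / α q.2) (x, t) := by
    filter_upwards [hle] with q hq
    rw [← htouch, mul_div_cancel_left₀ _ (hα₀ t).ne', sub_self]
    exact sub_nonpos.2 ((le_div_iff₀' (hα₀ _)).2 hq)
  have hgrad : HasGradientAt (fun z => (N t + k * ‖z - y‖ ^ 2) / α t)
      ((α t)⁻¹ • (2 * k) • (x - y)) x := by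
    simp only [div_eq_inv_mul]
    exact hasGradientAt_const_mul _
      (hasGradientAt_const_add _ (hasGradientAt_const_mul_norm_sub_sq k y x))
  have htime : HasDerivAt (fun τ => (N τ + k * ‖x - y‖ ^ 2) / α τ)
      ((N' * α t - (N t + k * ‖x - y‖ ^ 2) * deriv α t) / α t ^ 2) t :=
    (hN'.add_const _).fun_div (hα.differentiable one_ne_zero t).hasDerivAt (hα₀ t).ne'
  have key := mul_le_mul_of_nonneg_left (hu.test hφ ht hmax htime hgrad) (hα₀ t).le
  rw [← htouch] at key
  refine (le_of_eq ?_).trans key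
  have := (hα₀ t).ne'
  field_simp

lemma ForcedSuper.test_quadratic (hu : ForcedSuper H u f) {N : ℝ → ℝ} {N' : ℝ} {y' : En n}
    (hN : ContDiff ℝ 1 N) (hN' : HasDerivAt N N' t) (ht : 0 < t)
    (htouch : u (x, t) = N t - k * (‖x - y‖ ^ 2 + ‖x - y'‖ ^ 2))
    (hle : ∀ᶠ q : En n × ℝ in 𝓝 (x, t),
      N q.2 - k * (‖q.1 - y‖ ^ 2 + ‖q.1 - y'‖ ^ 2) ≤ u q) :
    f (x, t) ≤ N' + H x ((2 * k) • (y - x) + (2 * k) • (y' - x)) := by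
  have hsq (z : En n) : ContDiff ℝ 1 fun q : En n × ℝ => ‖q.1 - z‖ ^ 2 :=
    (contDiff_fst.sub contDiff_const).norm_sq ℝ
  have hgrad (z : En n) : HasGradientAt (fun x' => -k * ‖x' - z‖ ^ 2) ((2 * k) • (z - x)) x := by
    convert hasGradientAt_const_mul_norm_sub_sq (-k) z x using 1
    rw [mul_neg, neg_smul, ← smul_neg, neg_sub]
  refine hu.test (φ := fun q => N q.2 + (-k * ‖q.1 - y‖ ^ 2 + -k * ‖q.1 - y'‖ ^ 2))
    ((hN.comp contDiff_snd).add ((contDiff_const.mul (hsq y)).add (contDiff_const.mul (hsq y'))))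
    ht ?_ (hN'.add_const (-k * ‖x - y‖ ^ 2 + -k * ‖x - y'‖ ^ 2))
    (hasGradientAt_const_add (N t) (hasGradientAt_add (hgrad y) (hgrad y')))
  filter_upwards [hle] with q hq
  linarith

lemma SingleSub.test_weighted_quadratic {w : En n → ℝ} {c γ N : ℝ} (hw : SingleSub H w c)
    (hγ : 0 < γ) (htouch : γ * w x = N + k * ‖x - y‖ ^ 2)
    (hle : ∀ᶠ z in 𝓝 x, γ * w z ≤ N + k * ‖z - y‖ ^ 2) :
    H x (γ⁻¹ • (2 * k) • (x - y)) ≤ c := by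
  have hgrad := hasGradientAt_const_mul γ⁻¹ (hasGradientAt_const_mul_norm_sub_sq k y x)
  have key := hw (fun z => γ⁻¹ * (k * ‖z - y‖ ^ 2))
    (contDiff_const.mul (contDiff_const.mul ((contDiff_id.sub contDiff_const).norm_sq ℝ))) x ?_
  · rwa [hgrad.gradient] at key
  · filter_upwards [hle] with z hz
    have hmul : γ⁻¹ * (γ * w z - k * ‖z - y‖ ^ 2) ≤ γ⁻¹ * (γ * w x - k * ‖x - y‖ ^ 2) :=
      mul_le_mul_of_nonneg_left (by linarith) (inv_nonneg.2 hγ.le)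
    rwa [mul_sub, mul_sub, inv_mul_cancel_left₀ hγ.ne', inv_mul_cancel_left₀ hγ.ne'] at hmul

end QuadraticTest

/-- The data of a doubling-of-variables argument: a subsolution `A` in the time variable `s`, a
supersolution `B` in the time variable `t`, a stationary function `w`, time-dependent weights
`α` and `γ` of `A` and `w`, and a coupling `Θ` of the two times. -/
structure Doubling (n : ℕ) where
  A : En n × ℝ → ℝ
  B : En n × ℝ → ℝ
  w : En n → ℝ
  α : ℝ → ℝ
  γ : ℝ → ℝ
  Θ : ℝ × ℝ → ℝ
  continuous_A : Continuous A
  continuous_B : Continuous B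
  continuous_w : Continuous w
  periodic_A : ZPeriodicST A
  periodic_B : ZPeriodicST B
  periodic_w : ZPeriodic w
  contDiff_α : ContDiff ℝ 1 α
  contDiff_γ : ContDiff ℝ 1 γ
  contDiff_Θ : ContDiff ℝ 1 Θ
  α_pos : ∀ s, 0 < α s
  γ_nonneg : ∀ s, 0 ≤ γ s

namespace Doubling

variable {n : ℕ} (D : Doubling n) {H : En n → En n → ℝ} {f g : En n × ℝ → ℝ}
  {K O : Set (ℝ × ℝ)} {k m : ℝ} {x y a b : En n} {s t : ℝ}

/-- The functional `α(s) A(x,s) - B(x,t) + γ(s) w(x) - Θ(s,t)` to be bounded from above. -/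
def diagonal (x : En n) (s t : ℝ) : ℝ :=
  D.α s * D.A (x, s) - D.B (x, t) + D.γ s * D.w x - D.Θ (s, t)

/-- The functional `diagonal` with its three spatial variables made independent, `A` being
evaluated at `y + a`, `B` at `y` and `w` at `y + b`, at the price of the penalty
`k (|a|² + |b|²)`. -/
noncomputable def penalized (k : ℝ) (y a b : En n) (s t : ℝ) : ℝ :=
  D.α s * D.A (y + a, s) - D.B (y, t) + D.γ s * D.w (y + b) - D.Θ (s, t)
    - k * (‖a‖ ^ 2 + ‖b‖ ^ 2)

/-- The penalized functional attains at `(y, a, b, s, t)` its maximum over unit displacements and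
times in `K`. -/
def IsPenalizedMax (K : Set (ℝ × ℝ)) (k : ℝ) (y a b : En n) (s t : ℝ) : Prop :=
  ∀ y' a' b' s' t', ‖a'‖ ≤ 1 → ‖b'‖ ≤ 1 → (s', t') ∈ K →
    D.penalized k y' a' b' s' t' ≤ D.penalized k y a b s t

/-- The viscosity inequalities at a maximum of the doubled functional, where `A`, `B` and `w` are
touched at `xA`, `xB` and `xw`, and `p`, `q` are the momenta of `A` and `w`. -/
structure HasJet (H : En n → En n → ℝ) (f g : En n × ℝ → ℝ) (xA xB xw : En n) (s t : ℝ)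
    (p q : En n) : Prop where
  sub : fderiv ℝ D.Θ (s, t) (1, 0) - deriv D.γ s * D.w xw - deriv D.α s * D.A (xA, s)
    + D.α s * H xA p ≤ D.α s * f (xA, s)
  super : g (xB, t) ≤ -fderiv ℝ D.Θ (s, t) (0, 1) + H xB (D.α s • p + D.γ s • q)
  stationary : 0 < D.γ s → H xw q ≤ 0

lemma penalized_add_intVec (k : ℝ) (y a b : En n) (s t : ℝ) (v : Fin n → ℤ) :
    D.penalized k (y + intVec n v) a b s t = D.penalized k y a b s t := by
  simp only [penalized, add_right_comm y, D.periodic_A _ v, D.periodic_B _ v, D.periodic_w _ v]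

lemma penalized_zero_zero (k : ℝ) (x : En n) (s t : ℝ) :
    D.penalized k x 0 0 s t = D.diagonal x s t := by
  simp [penalized, diagonal]

lemma continuous_penalized (k : ℝ) :
    Continuous fun z : En n × En n × En n × ℝ × ℝ =>
      D.penalized k z.1 z.2.1 z.2.2.1 z.2.2.2.1 z.2.2.2.2 := by
  have := D.continuous_A
  have := D.continuous_B
  have := D.continuous_w
  have := D.contDiff_α.continuous
  have := D.contDiff_γ.continuous
  have := D.contDiff_Θ.continuous
  unfold penalized
  fun_prop

variable {D}

lemma exists_isPenalizedMax (hK : IsCompact K) (hne : K.Nonempty) (k : ℝ) :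
    ∃ z : En n × En n × En n × ℝ × ℝ, ‖z.1‖ ≤ √n ∧ ‖z.2.1‖ ≤ 1 ∧ ‖z.2.2.1‖ ≤ 1 ∧ z.2.2.2 ∈ K ∧
      D.IsPenalizedMax K k z.1 z.2.1 z.2.2.1 z.2.2.2.1 z.2.2.2.2 := by
  obtain ⟨q, hq⟩ := hne
  obtain ⟨z, ⟨hy, ha, hb, hz⟩, hmax⟩ := ((isCompact_closedBall (0 : En n) (√n)).prod
    ((isCompact_closedBall (0 : En n) 1).prod
      ((isCompact_closedBall (0 : En n) 1).prod hK))).exists_isMaxOn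
    ⟨(0, 0, 0, q), by simp [hq]⟩ (D.continuous_penalized k).continuousOn
  rw [mem_closedBall_zero_iff] at hy ha hb
  refine ⟨z, hy, ha, hb, hz, fun y' a' b' s' t' ha' hb' hst' => ?_⟩
  obtain ⟨v, hv⟩ := exists_norm_add_intVec_le y'
  rw [← D.penalized_add_intVec _ _ _ _ _ _ v]
  exact hmax (a := (y' + intVec n v, a', b', s', t')) (by simp [hv, ha', hb', hst'])

namespace IsPenalizedMax

lemma sub_jet (hmax : D.IsPenalizedMax K k y a b s t) (hA : ForcedSub H D.A f)
    (hO : IsOpen O) (hOK : O ⊆ K) (hst : (s, t) ∈ O) (hs : 0 < s) (ha : ‖a‖ < 1)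
    (hb : ‖b‖ ≤ 1) :
    fderiv ℝ D.Θ (s, t) (1, 0) - deriv D.γ s * D.w (y + b) - deriv D.α s * D.A (y + a, s)
      + D.α s * H (y + a) ((D.α s)⁻¹ • (2 * k) • a) ≤ D.α s * f (y + a, s) := by
  have hγ := D.contDiff_γ
  have hΘ := D.contDiff_Θ
  set c := D.penalized k y a b s t + D.B (y, t) + k * ‖b‖ ^ 2 with hc
  have hΘ' : HasDerivAt (fun σ => D.Θ (σ, t)) (fderiv ℝ D.Θ (s, t) (1, 0)) s :=
    (hΘ.differentiable one_ne_zero (s, t)).hasFDerivAt.comp_hasDerivAt s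
      ((hasDerivAt_id s).prodMk (hasDerivAt_const s t))
  have hN' := (hΘ'.const_add c).fun_sub
    ((hγ.differentiable one_ne_zero s).hasDerivAt.mul_const (D.w (y + b)))
  have key := hA.test_weighted_quadratic (x := y + a) (y := y) (k := k) D.contDiff_α D.α_pos
    (by fun_prop) hN' hs (by simp only [hc, penalized, add_sub_cancel_left]; ring) ?_
  · rwa [add_sub_cancel_left] at key
  have hnear : ∀ᶠ q : En n × ℝ in 𝓝 (y + a, s), ‖q.1 - y‖ < 1 :=
    (by fun_prop : Continuous fun q : En n × ℝ => ‖q.1 - y‖).continuousAt.eventually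
      (gt_mem_nhds (by simpa using ha))
  have hnearO : ∀ᶠ q : En n × ℝ in 𝓝 (y + a, s), (q.2, t) ∈ O :=
    (by fun_prop : Continuous fun q : En n × ℝ => (q.2, t)).continuousAt.eventually
      (hO.mem_nhds hst)
  filter_upwards [hnear, hnearO] with q hq hqO
  have hle := hmax y (q.1 - y) b q.2 t hq.le hb (hOK hqO)
  rw [← sub_nonpos] at hle ⊢
  refine le_of_eq_of_le ?_ hle
  simp only [hc, penalized, add_sub_cancel]
  ring

lemma super_jet (hmax : D.IsPenalizedMax K k y a b s t) (hB : ForcedSuper H D.B g)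
    (hO : IsOpen O) (hOK : O ⊆ K) (hst : (s, t) ∈ O) (ht : 0 < t) (ha : ‖a‖ < 1)
    (hb : ‖b‖ < 1) :
    g (y, t) ≤ -fderiv ℝ D.Θ (s, t) (0, 1) + H y ((2 * k) • a + (2 * k) • b) := by
  have hΘ := D.contDiff_Θ
  set c := D.α s * D.A (y + a, s) + D.γ s * D.w (y + b) - D.penalized k y a b s t with hc
  have hN' := (hasDerivAt_time hΘ s t).const_sub c
  have key := hB.test_quadratic (x := y) (y := y + a) (y' := y + b) (k := k) (by fun_prop) hN' ht
    (by simp only [hc, penalized, sub_add_cancel_left, norm_neg]; ring) ?_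
  · rwa [add_sub_cancel_left, add_sub_cancel_left] at key
  have hnear {z : En n} (hz : ‖z‖ < 1) : ∀ᶠ q : En n × ℝ in 𝓝 (y, t), ‖y + z - q.1‖ < 1 :=
    (by fun_prop : Continuous fun q : En n × ℝ => ‖y + z - q.1‖).continuousAt.eventually
      (gt_mem_nhds (by simpa using hz))
  have hnearO : ∀ᶠ q : En n × ℝ in 𝓝 (y, t), (s, q.2) ∈ O :=
    (by fun_prop : Continuous fun q : En n × ℝ => (s, q.2)).continuousAt.eventually
      (hO.mem_nhds hst)
  filter_upwards [hnear ha, hnear hb, hnearO] with q hqa hqb hqO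
  have hle := hmax q.1 (y + a - q.1) (y + b - q.1) s q.2 hqa.le hqb.le (hOK hqO)
  rw [← sub_nonpos] at hle ⊢
  refine le_of_eq_of_le ?_ hle
  simp only [hc, penalized, add_sub_cancel, norm_sub_rev q.1]
  ring

lemma displacement_eq_zero (hmax : D.IsPenalizedMax K k y a b s t) (hst : (s, t) ∈ K)
    (hk : 0 < k) (ha : ‖a‖ ≤ 1) (hγ : D.γ s = 0) : b = 0 := by
  have hle := hmax y a 0 s t ha (by simp) hst
  simp only [penalized, hγ, zero_mul, norm_zero] at hle
  have : ‖b‖ ^ 2 ≤ 0 := by nlinarith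
  simpa using le_antisymm this (sq_nonneg _)

lemma stationary_jet (hmax : D.IsPenalizedMax K k y a b s t) (hw : SingleSub H D.w 0)
    (hst : (s, t) ∈ K) (ha : ‖a‖ ≤ 1) (hb : ‖b‖ < 1) (hγ : 0 < D.γ s) :
    H (y + b) ((D.γ s)⁻¹ • (2 * k) • b) ≤ 0 := by
  have key := hw.test_weighted_quadratic (x := y + b) (y := y) (k := k)
    (N := D.γ s * D.w (y + b) - k * ‖b‖ ^ 2) hγ (by rw [add_sub_cancel_left]; ring) ?_
  · rwa [add_sub_cancel_left] at key
  have hnear : ∀ᶠ z : En n in 𝓝 (y + b), ‖z - y‖ < 1 :=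
    (by fun_prop : Continuous fun z : En n => ‖z - y‖).continuousAt.eventually
      (gt_mem_nhds (by simpa using hb))
  filter_upwards [hnear] with z hz
  have hle := hmax y a (z - y) s t ha hz.le hst
  simp only [penalized, add_sub_cancel] at hle
  linarith

lemma hasJet (hmax : D.IsPenalizedMax K k y a b s t) (hA : ForcedSub H D.A f)
    (hB : ForcedSuper H D.B g) (hw : ∀ s, 0 < D.γ s → SingleSub H D.w 0) (hO : IsOpen O)
    (hOK : O ⊆ K) (hst : (s, t) ∈ O) (hs : 0 < s) (ht : 0 < t) (hk : 0 < k) (ha : ‖a‖ < 1)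
    (hb : ‖b‖ < 1) :
    D.HasJet H f g (y + a) y (y + b) s t ((D.α s)⁻¹ • (2 * k) • a) ((D.γ s)⁻¹ • (2 * k) • b) where
  sub := hmax.sub_jet hA hO hOK hst hs ha hb.le
  super := by
    have hγb : D.γ s • (D.γ s)⁻¹ • (2 * k) • b = (2 * k) • b := by
      by_cases hγ : D.γ s = 0
      · simp [hmax.displacement_eq_zero (hOK hst) hk ha.le hγ]
      · rw [smul_inv_smul₀ hγ]
    rw [smul_inv_smul₀ (D.α_pos s).ne', hγb]
    exact hmax.super_jet hB hO hOK hst ht ha hb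
  stationary hγ := hmax.stationary_jet (hw s hγ) (hOK hst) ha.le hb hγ

end IsPenalizedMax

end Doubling

namespace Doubling

variable {n : ℕ} {D : Doubling n} {H : En n → En n → ℝ} {f g : En n × ℝ → ℝ}
  {K O : Set (ℝ × ℝ)} {m : ℝ} {x : En n} {s t : ℝ}

section JetLimit

variable {ι : Type*} {xA xB xw p q : ι → En n} {T : ι → ℝ × ℝ}

lemma continuous_fderiv_coupling (D : Doubling n) (v : ℝ × ℝ) :
    Continuous fun z => fderiv ℝ D.Θ z v :=
  (D.contDiff_Θ.continuous_fderiv one_ne_zero).clm_apply continuous_const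

lemma HasJet.of_tendsto {l : Filter ι} [l.NeBot] {p₀ q₀ : En n}
    (hjet : ∀ᶠ i in l, D.HasJet H f g (xA i) (xB i) (xw i) (T i).1 (T i).2 (p i) (q i))
    (hH : Continuous fun z : En n × En n => H z.1 z.2) (hf : Continuous f) (hg : Continuous g)
    (hA : Tendsto xA l (𝓝 x)) (hB : Tendsto xB l (𝓝 x)) (hw : Tendsto xw l (𝓝 x))
    (hT : Tendsto T l (𝓝 (s, t))) (hp : Tendsto p l (𝓝 p₀)) (hq : Tendsto q l (𝓝 q₀)) :
    D.HasJet H f g x x x s t p₀ q₀ := by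
  have hs : Tendsto (fun i => (T i).1) l (𝓝 s) := hT.fst_nhds
  have ht : Tendsto (fun i => (T i).2) l (𝓝 t) := hT.snd_nhds
  have hα := (D.contDiff_α.continuous.tendsto s).comp hs
  have hγ := (D.contDiff_γ.continuous.tendsto s).comp hs
  have hα' := ((D.contDiff_α.continuous_deriv le_rfl).tendsto s).comp hs
  have hγ' := ((D.contDiff_γ.continuous_deriv le_rfl).tendsto s).comp hs
  have hΘ (v : ℝ × ℝ) := ((D.continuous_fderiv_coupling v).tendsto (s, t)).comp hT
  refine ⟨le_of_tendsto_of_tendsto ?_ ?_ (hjet.mono fun i hi => hi.sub),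
    le_of_tendsto_of_tendsto ?_ ?_ (hjet.mono fun i hi => hi.super), fun hpos => ?_⟩
  · exact (((hΘ (1, 0)).sub (hγ'.mul ((D.continuous_w.tendsto x).comp hw))).sub
      (hα'.mul ((D.continuous_A.tendsto (x, s)).comp (hA.prodMk_nhds hs)))).add
      (hα.mul ((hH.tendsto (x, p₀)).comp (hA.prodMk_nhds hp)))
  · exact hα.mul ((hf.tendsto (x, s)).comp (hA.prodMk_nhds hs))
  · exact (hg.tendsto (x, t)).comp (hB.prodMk_nhds ht)
  · exact (hΘ (0, 1)).neg.add ((hH.tendsto (x, D.α s • p₀ + D.γ s • q₀)).comp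
      (hB.prodMk_nhds ((hα.smul hp).add (hγ.smul hq))))
  · refine le_of_tendsto ((hH.tendsto (x, q₀)).comp (hw.prodMk_nhds hq)) ?_
    filter_upwards [hjet, hγ.eventually (lt_mem_nhds hpos)] with i hi hγi
    exact hi.stationary hγi

lemma exists_hasJet_of_tendsto (l : Ultrafilter ι)
    (hjet : ∀ᶠ i in (l : Filter ι),
      D.HasJet H f g (xA i) (xB i) (xw i) (T i).1 (T i).2 (p i) (q i))
    (hq : ∀ᶠ i in (l : Filter ι), D.γ (T i).1 = 0 → q i = 0)
    (hH : Continuous fun z : En n × En n => H z.1 z.2) (hcoer : Coercive H)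
    (hf : Continuous f) (hg : Continuous g) (hA : Tendsto xA l (𝓝 x)) (hB : Tendsto xB l (𝓝 x))
    (hw : Tendsto xw l (𝓝 x)) (hT : Tendsto T l (𝓝 (s, t))) :
    ∃ p₀ q₀, D.HasJet H f g x x x s t p₀ q₀ := by
  let bound (xA xw : En n) (z : ℝ × ℝ) : ℝ := f (xA, z.1) - (D.α z.1)⁻¹ *
    (fderiv ℝ D.Θ z (1, 0) - deriv D.γ z.1 * D.w xw - deriv D.α z.1 * D.A (xA, z.1))
  have hbound : Continuous fun z : En n × En n × ℝ × ℝ => bound z.1 z.2.1 z.2.2 := by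
    have := D.continuous_A
    have := D.continuous_w
    have := D.contDiff_α.continuous
    have := D.contDiff_α.continuous_deriv le_rfl
    have := D.contDiff_γ.continuous_deriv le_rfl
    have := D.continuous_fderiv_coupling (1, 0)
    have (z : En n × En n × ℝ × ℝ) : D.α z.2.2.1 ≠ 0 := (D.α_pos _).ne'
    fun_prop (disch := assumption)
  have hlim := (hbound.tendsto (x, x, s, t)).comp (hA.prodMk_nhds (hw.prodMk_nhds hT))
  obtain ⟨R, hR⟩ := hcoer.exists_norm_le (bound x x (s, t) + 1)
  obtain ⟨R', hR'⟩ := hcoer.exists_norm_le 0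
  have hp_le : ∀ᶠ i in (l : Filter ι), ‖p i‖ ≤ R := by
    filter_upwards [hjet, hlim.eventually (gt_mem_nhds (lt_add_one _))] with i hi hlt
    refine hR (xA i) (p i) (le_trans ?_ hlt.le)
    have hα := D.α_pos (T i).1
    refine le_of_mul_le_mul_left ?_ hα
    simp only [bound, Function.comp_apply, mul_sub _ (f _), mul_inv_cancel_left₀ hα.ne']
    linarith [hi.sub]
  have hq_le : ∀ᶠ i in (l : Filter ι), ‖q i‖ ≤ max R' 0 := by
    filter_upwards [hjet, hq] with i hi hqi
    rcases (D.γ_nonneg (T i).1).eq_or_lt with hγ | hγ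
    · simp [hqi hγ.symm]
    · exact (hR' _ _ (hi.stationary hγ)).trans (le_max_left _ _)
  obtain ⟨p₀, -, hp₀⟩ := exists_tendsto_ultrafilter_of_norm_le l hp_le
  obtain ⟨q₀, -, hq₀⟩ := exists_tendsto_ultrafilter_of_norm_le l hq_le
  exact ⟨p₀, q₀, .of_tendsto hjet hH hf hg hA hB hw hT hp₀ hq₀⟩

end JetLimit

lemma penalized_eq_sub (k : ℝ) (y a b : En n) (s t : ℝ) :
    D.penalized k y a b s t = D.penalized 0 y a b s t - k * (‖a‖ ^ 2 + ‖b‖ ^ 2) := by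
  simp only [penalized, zero_mul, sub_zero]

lemma tendsto_displacement {l : Filter ℕ} (hl : l ≤ atTop) {y a b : ℕ → En n}
    {T : ℕ → ℝ × ℝ} (hK : IsCompact K) (hT : ∀ k, T k ∈ K) (ha : ∀ k, ‖a k‖ ≤ 1)
    (hb : ∀ k, ‖b k‖ ≤ 1)
    (hval : ∀ k : ℕ, m ≤ D.penalized k (y k) (a k) (b k) (T k).1 (T k).2) :
    Tendsto a l (𝓝 0) ∧ Tendsto b l (𝓝 0) := by
  obtain ⟨z, -, -, -, -, hz⟩ := exists_isPenalizedMax (D := D) hK ⟨T 0, hT 0⟩ 0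
  have hsum : Tendsto (fun k => ‖a k‖ ^ 2 + ‖b k‖ ^ 2) l (𝓝 0) := by
    refine tendsto_zero_of_natCast_mul_le hl (fun k => by positivity) (M := D.penalized 0 z.1
      z.2.1 z.2.2.1 z.2.2.2.1 z.2.2.2.2 - m) (Eventually.of_forall fun k => ?_)
    have hval := hval k
    rw [penalized_eq_sub] at hval
    linarith [hz (y k) (a k) (b k) (T k).1 (T k).2 (ha k) (hb k) (hT k)]
  have hsq {r : ℕ → ℝ} (hr : ∀ k, r k ^ 2 ≤ ‖a k‖ ^ 2 + ‖b k‖ ^ 2) : Tendsto r l (𝓝 0) := by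
    have hr2 := squeeze_zero (fun k => sq_nonneg (r k)) hr hsum
    refine (tendsto_zero_iff_abs_tendsto_zero r).2 ?_
    simpa only [Function.comp_def, Real.sqrt_sq_eq_abs, Real.sqrt_zero] using hr2.sqrt
  exact ⟨tendsto_zero_iff_norm_tendsto_zero.2 (hsq fun k => by simp),
    tendsto_zero_iff_norm_tendsto_zero.2 (hsq fun k => by simp)⟩

lemma exists_tendsto_isPenalizedMax (l : Ultrafilter ℕ) (hl : (l : Filter ℕ) ≤ atTop)
    (hK : IsCompact K) (hm : ∃ x s t, (s, t) ∈ K ∧ m ≤ D.diagonal x s t) :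
    ∃ (y a b : ℕ → En n) (T : ℕ → ℝ × ℝ) (x : En n) (s t : ℝ),
      (∀ k : ℕ, D.IsPenalizedMax K k (y k) (a k) (b k) (T k).1 (T k).2) ∧
      Tendsto y l (𝓝 x) ∧ Tendsto a l (𝓝 0) ∧ Tendsto b l (𝓝 0) ∧ Tendsto T l (𝓝 (s, t)) ∧
      ‖x‖ ≤ √n ∧ (s, t) ∈ K ∧ m ≤ D.diagonal x s t := by
  obtain ⟨x₁, s₁, t₁, hK₁, hm₁⟩ := hm
  choose z hy ha hb hT hmax using
    fun k : ℕ => exists_isPenalizedMax (D := D) hK ⟨(s₁, t₁), hK₁⟩ k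
  have hval (k : ℕ) : m ≤ D.penalized k (z k).1 (z k).2.1 (z k).2.2.1 (z k).2.2.2.1
      (z k).2.2.2.2 := by
    refine hm₁.trans ?_
    rw [← D.penalized_zero_zero k]
    exact hmax k x₁ 0 0 s₁ t₁ (by simp) (by simp) hK₁
  obtain ⟨ha₀, hb₀⟩ := tendsto_displacement hl hK hT ha hb hval
  obtain ⟨x, hx, hyx⟩ := exists_tendsto_ultrafilter_of_norm_le l (Eventually.of_forall hy)
  obtain ⟨⟨s, t⟩, hst, hTst⟩ := exists_tendsto_ultrafilter l hK (Eventually.of_forall hT)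
  refine ⟨_, _, _, _, x, s, t, hmax, hyx, ha₀, hb₀, hTst, hx, hst, ?_⟩
  rw [← D.penalized_zero_zero 0]
  refine ge_of_tendsto (((D.continuous_penalized 0).tendsto (x, 0, 0, s, t)).comp
    (hyx.prodMk_nhds (ha₀.prodMk_nhds (hb₀.prodMk_nhds hTst)))) (Eventually.of_forall fun k => ?_)
  have hval := hval k
  rw [penalized_eq_sub] at hval
  have : 0 ≤ (k : ℝ) * (‖(z k).2.1‖ ^ 2 + ‖(z k).2.2.1‖ ^ 2) := by positivity
  exact hval.trans (sub_le_self _ this)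

theorem exists_hasJet (hH : Continuous fun z : En n × En n => H z.1 z.2) (hcoer : Coercive H)
    (hf : Continuous f) (hg : Continuous g) (hA : ForcedSub H D.A f) (hB : ForcedSuper H D.B g)
    (hw : ∀ s, 0 < D.γ s → SingleSub H D.w 0) (hK : IsCompact K) (hO : IsOpen O) (hOK : O ⊆ K)
    (hpos : ∀ s t, (s, t) ∈ O → 0 < s ∧ 0 < t)
    (hm : ∃ x s t, (s, t) ∈ K ∧ m ≤ D.diagonal x s t)
    (hbdry : ∀ x s t, (s, t) ∈ K → (s, t) ∉ O → D.diagonal x s t < m) :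
    ∃ x s t p q, ‖x‖ ≤ √n ∧ (s, t) ∈ O ∧ m ≤ D.diagonal x s t ∧
      D.HasJet H f g x x x s t p q := by
  let l : Ultrafilter ℕ := hyperfilter ℕ
  have hl : (l : Filter ℕ) ≤ atTop := Nat.hyperfilter_le_atTop
  obtain ⟨y, a, b, T, x, s, t, hmax, hy, ha, hb, hT, hx, hst, hmx⟩ :=
    exists_tendsto_isPenalizedMax l hl hK hm
  have hstO : (s, t) ∈ O := by
    by_contra hnot
    exact (hbdry x s t hst hnot).not_ge hmx
  have hsmall {v : ℕ → En n} (hv : Tendsto v l (𝓝 0)) : ∀ᶠ k in (l : Filter ℕ), ‖v k‖ < 1 :=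
    hv.norm.eventually (gt_mem_nhds (by simp))
  have hTO : ∀ᶠ k in (l : Filter ℕ), T k ∈ O := hT.eventually (hO.mem_nhds hstO)
  have hkpos : ∀ᶠ k : ℕ in (l : Filter ℕ), (0 : ℝ) < k :=
    hl ((eventually_gt_atTop 0).mono fun k hk => Nat.cast_pos.2 hk)
  have hjet : ∀ᶠ k : ℕ in (l : Filter ℕ), D.HasJet H f g (y k + a k) (y k) (y k + b k) (T k).1
      (T k).2 ((D.α (T k).1)⁻¹ • (2 * (k : ℝ)) • a k) ((D.γ (T k).1)⁻¹ • (2 * (k : ℝ)) • b k) := by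
    filter_upwards [hsmall ha, hsmall hb, hTO, hkpos] with k hak hbk hTk hk
    exact (hmax k).hasJet hA hB hw hO hOK hTk (hpos _ _ hTk).1 (hpos _ _ hTk).2 hk hak hbk
  obtain ⟨p, q, hpq⟩ := exists_hasJet_of_tendsto l hjet
    (Eventually.of_forall fun k hγ => by rw [hγ, inv_zero, zero_smul]) hH hcoer hf hg
    (by simpa using hy.add ha) hy (by simpa using hy.add hb) hT
  exact ⟨x, s, t, p, q, hx, hstO, hmx, hpq⟩

end Doubling

/-! ### Comparison -/

/-- A continuous periodic subsolution `A` of `∂ₜ u + H(x, Du) = f` and a continuous periodic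
supersolution `B` of `∂ₜ u + H(x, Du) = g`, for a continuous coercive Hamiltonian: the setting of
the comparison principle. -/
structure ComparisonPair {n : ℕ} (H : En n → En n → ℝ) (A B f g : En n × ℝ → ℝ) : Prop where
  continuous_hamiltonian : Continuous fun z : En n × En n => H z.1 z.2
  coercive : Coercive H
  continuous_A : Continuous A
  continuous_B : Continuous B
  continuous_f : Continuous f
  continuous_g : Continuous g
  periodic_A : ZPeriodicST A
  periodic_B : ZPeriodicST B
  sub : ForcedSub H A f
  super : ForcedSuper H B g

/-- Doubling of the time variable only, with penalty `k (t - s)²` and barrier `θ`. -/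
def timeDoubling {n : ℕ} (A B : En n × ℝ → ℝ) (hA : Continuous A) (hB : Continuous B)
    (hAper : ZPeriodicST A) (hBper : ZPeriodicST B) {θ : ℝ → ℝ} (hθ : ContDiff ℝ 1 θ) (k : ℝ) :
    Doubling n where
  A := A
  B := B
  w := 0
  α := 1
  γ := 0
  Θ z := k * (z.2 - z.1) ^ 2 + θ z.1
  continuous_A := hA
  continuous_B := hB
  continuous_w := continuous_zero
  periodic_A := hAper
  periodic_B := hBper
  periodic_w _ _ := rfl
  contDiff_α := contDiff_const
  contDiff_γ := contDiff_const
  contDiff_Θ := by fun_prop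
  α_pos _ := one_pos
  γ_nonneg _ := le_rfl

lemma fderiv_add_fderiv_of_hasDerivAt {Θ : ℝ × ℝ → ℝ} (hΘ : ContDiff ℝ 1 Θ) {s t d : ℝ}
    (hd : HasDerivAt (fun τ => Θ (s + τ, t + τ)) d 0) :
    fderiv ℝ Θ (s, t) (1, 0) + fderiv ℝ Θ (s, t) (0, 1) = d := by
  have hpath (r : ℝ) : HasDerivAt (fun τ => r + τ) 1 0 := (hasDerivAt_id 0).const_add r
  have hΘ' : HasFDerivAt Θ (fderiv ℝ Θ (s, t)) (s + 0, t + 0) := by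
    rw [add_zero, add_zero]
    exact (hΘ.differentiable one_ne_zero (s, t)).hasFDerivAt
  rw [← map_add, Prod.mk_add_mk, add_zero, zero_add]
  exact (hΘ'.comp_hasDerivAt 0 ((hpath s).prodMk (hpath t))).unique hd

namespace ComparisonPair

variable {n : ℕ} {H : En n → En n → ℝ} {A B f g : En n × ℝ → ℝ} {θ : ℝ → ℝ} {T σ : ℝ}

lemma exists_doubled_contact (P : ComparisonPair H A B f g) (hθ : ContDiff ℝ 1 θ) {x₁ : En n}
    {t₁ : ℝ} (ht₁ : t₁ ∈ Icc 0 T) (hσ : σ ≤ A (x₁, t₁) - B (x₁, t₁) - θ t₁) (k : ℝ) :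
    ∃ z : En n × ℝ × ℝ, ‖z.1‖ ≤ √n ∧ z.2 ∈ Icc 0 T ×ˢ Icc 0 T ∧
      σ ≤ A (z.1, z.2.1) - B (z.1, z.2.2) - θ z.2.1 - k * (z.2.2 - z.2.1) ^ 2 ∧
      (z.2 ∈ Ioo 0 T ×ˢ Ioo 0 T → deriv θ z.2.1 ≤ f (z.1, z.2.1) - g (z.1, z.2.2)) := by
  let D := timeDoubling A B P.continuous_A P.continuous_B P.periodic_A P.periodic_B hθ k
  have hD (x : En n) (s t : ℝ) :
      D.diagonal x s t = A (x, s) - B (x, t) - θ s - k * (t - s) ^ 2 := by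
    simp only [D, Doubling.diagonal, timeDoubling, Pi.one_apply, Pi.zero_apply]
    ring
  by_cases hbdry : ∀ x s t, (s, t) ∈ Icc 0 T ×ˢ Icc 0 T → (s, t) ∉ Ioo 0 T ×ˢ Ioo 0 T →
    D.diagonal x s t < σ
  · obtain ⟨x, s, t, p, q, hx, hst, hval, hjet⟩ := D.exists_hasJet P.continuous_hamiltonian
      P.coercive P.continuous_f P.continuous_g P.sub P.super (fun _ h => absurd h (lt_irrefl _))
      (isCompact_Icc.prod isCompact_Icc) (isOpen_Ioo.prod isOpen_Ioo)
      (prod_mono Ioo_subset_Icc_self Ioo_subset_Icc_self) (fun s t h => ⟨h.1.1, h.2.1⟩)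
      ⟨x₁, t₁, t₁, ⟨ht₁, ht₁⟩, by rw [hD]; linarith⟩ hbdry
    rw [hD] at hval
    refine ⟨(x, s, t), hx, prod_mono Ioo_subset_Icc_self Ioo_subset_Icc_self hst, hval, fun _ => ?_⟩
    have hΘ : HasDerivAt (fun τ => D.Θ (s + τ, t + τ)) (deriv θ s) 0 := by
      have hθs : HasDerivAt θ (deriv θ s) (s + 0) := by
        rw [add_zero]
        exact (hθ.differentiable one_ne_zero s).hasDerivAt
      simpa [D, timeDoubling] using (hθs.comp_const_add s 0).const_add (k * (t - s) ^ 2)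
    have hsum := fderiv_add_fderiv_of_hasDerivAt D.contDiff_Θ hΘ
    have hsub := hjet.sub
    have hsuper := hjet.super
    simp only [D, timeDoubling, Pi.one_def, Pi.zero_def, deriv_const, zero_mul, sub_zero, one_mul,
      one_smul, zero_smul, add_zero] at hsum hsub hsuper
    linarith
  · push Not at hbdry
    obtain ⟨x, s, t, hst, hnot, hval⟩ := hbdry
    obtain ⟨v, hv⟩ := exists_norm_add_intVec_le x
    refine ⟨(x + intVec n v, s, t), hv, hst, ?_, fun h => absurd h hnot⟩
    simpa only [P.periodic_A x v, P.periodic_B x v, hD] using hval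

lemma exists_contact (P : ComparisonPair H A B f g) (hθ : ContDiff ℝ 1 θ) {x₁ : En n} {t₁ : ℝ}
    (ht₁ : t₁ ∈ Icc 0 T) (hσ : σ ≤ A (x₁, t₁) - B (x₁, t₁) - θ t₁) :
    ∃ x, ∃ t ∈ Icc 0 T, σ ≤ A (x, t) - B (x, t) - θ t ∧
      (t ∈ Ioo 0 T → deriv θ t ≤ f (x, t) - g (x, t)) := by
  let l : Ultrafilter ℕ := hyperfilter ℕ
  have hl : (l : Filter ℕ) ≤ atTop := Nat.hyperfilter_le_atTop
  choose z hx hK hval hstep using fun k : ℕ => P.exists_doubled_contact hθ ht₁ hσ k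
  obtain ⟨⟨x, s, t⟩, ⟨-, hs, -⟩, hlim⟩ := exists_tendsto_ultrafilter l
    ((isCompact_closedBall (0 : En n) (√n)).prod
      ((isCompact_Icc (a := 0) (b := T)).prod (isCompact_Icc (a := 0) (b := T))))
    (Eventually.of_forall fun k => ⟨mem_closedBall_zero_iff.2 (hx k), hK k⟩)
  have hcomp {F : En n × ℝ × ℝ → ℝ} (hF : Continuous F) :
      Tendsto (fun k => F (z k)) l (𝓝 (F (x, s, t))) := (hF.tendsto _).comp hlim
  have := P.continuous_A
  have := P.continuous_B
  have := P.continuous_f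
  have := P.continuous_g
  have := hθ.continuous
  have := hθ.continuous_deriv le_rfl
  have hdiff := hcomp
    (by fun_prop : Continuous fun q => A (q.1, q.2.1) - B (q.1, q.2.2) - θ q.2.1)
  have hsq := hcomp (by fun_prop : Continuous fun q => (q.2.2 - q.2.1) ^ 2)
  have hts : t = s := by
    refine sub_eq_zero.1 (pow_eq_zero_iff two_ne_zero |>.1 (tendsto_nhds_unique hsq
      (tendsto_zero_of_natCast_mul_le hl (M := A (x, s) - B (x, t) - θ s + 1 - σ)
        (fun k => sq_nonneg _) ?_)))
    filter_upwards [hdiff.eventually (gt_mem_nhds (lt_add_one _))] with k hk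
    exact (le_sub_comm.1 (hval k)).trans (sub_le_sub_right hk.le σ)
  subst hts
  refine ⟨x, t, hs, ge_of_tendsto hdiff (Eventually.of_forall fun k =>
    (hval k).trans (sub_le_self _ (by positivity))), fun ht => ?_⟩
  refine le_of_tendsto_of_tendsto (hcomp (by fun_prop : Continuous fun q => deriv θ q.2.1))
    (hcomp (by fun_prop : Continuous fun q => f (q.1, q.2.1) - g (q.1, q.2.2))) ?_
  filter_upwards [hlim.snd_nhds.eventually ((isOpen_Ioo.prod isOpen_Ioo).mem_nhds ⟨ht, ht⟩)]
    with k hk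
  exact hstep k hk

/- The barrier is raised by `σ e^{N (t - t₁)}`, with `N` so large that contact is impossible at the
final time `t₁ + 1`. -/
theorem sub_le_barrier (P : ComparisonPair H A B f g) (hθ : ContDiff ℝ 1 θ)
    (hinit : ∀ x, A (x, 0) - B (x, 0) ≤ θ 0)
    (hstep : ∀ x t, 0 < t → θ t < A (x, t) - B (x, t) → f (x, t) - g (x, t) ≤ deriv θ t)
    (x₁ : En n) {t₁ : ℝ} (ht₁ : 0 ≤ t₁) : A (x₁, t₁) - B (x₁, t₁) ≤ θ t₁ := by
  by_contra! hlt
  obtain ⟨σ, hσ, hσlt⟩ := exists_between (sub_pos.2 hlt)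
  have hAc := P.continuous_A
  have hBc := P.continuous_B
  have hθc := hθ.continuous
  obtain ⟨M, hM⟩ := ZPeriodicST.exists_abs_le (u := fun q => A q - B q - θ q.2)
    (fun x k t => by simp only [P.periodic_A x k, P.periodic_B x k]) (by fun_prop) (t₁ + 1)
  have hMpos : 0 < M := (hσ.trans hσlt).trans_le
    ((le_abs_self _).trans (hM x₁ t₁ ⟨ht₁, by linarith⟩))
  have hbump (t : ℝ) : 0 < σ / 2 * Real.exp (2 * M / σ * (t - t₁)) := by positivity
  have hderiv (t : ℝ) : HasDerivAt (fun t => θ t + σ / 2 * Real.exp (2 * M / σ * (t - t₁)))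
      (deriv θ t + σ / 2 * (Real.exp (2 * M / σ * (t - t₁)) * (2 * M / σ))) t := by
    refine (hθ.differentiable one_ne_zero t).hasDerivAt.add (HasDerivAt.const_mul _ (.exp ?_))
    simpa using ((hasDerivAt_id t).sub_const t₁).const_mul (2 * M / σ)
  obtain ⟨x, t, ⟨ht0, htT⟩, hval, hcontact⟩ := P.exists_contact (T := t₁ + 1) (σ := σ / 2)
    (by fun_prop : ContDiff ℝ 1 fun t => θ t + σ / 2 * Real.exp (2 * M / σ * (t - t₁)))
    (x₁ := x₁) ⟨ht₁, by linarith⟩ (by rw [sub_self, mul_zero, Real.exp_zero]; linarith)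
  have htpos : 0 < t := by
    refine ht0.lt_of_ne fun h => ?_
    subst h
    linarith [hinit x, hbump 0]
  have htlt : t < t₁ + 1 := by
    refine htT.lt_of_ne fun h => ?_
    have hexp := mul_le_mul_of_nonneg_left (Real.add_one_le_exp (2 * M / σ)) hσ.le
    rw [mul_add, mul_div_cancel₀ _ hσ.ne'] at hexp
    have hMt := (le_abs_self _).trans (hM x t ⟨ht0, htT⟩)
    rw [h, add_sub_cancel_left, mul_one] at hval
    rw [h] at hMt
    linarith
  have hcontact := hcontact ⟨htpos, htlt⟩
  rw [(hderiv t).deriv] at hcontact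
  have hpos : 0 < σ / 2 * (Real.exp (2 * M / σ * (t - t₁)) * (2 * M / σ)) := by positivity
  linarith [hstep x t htpos (by linarith [hbump t])]

end ComparisonPair

lemma hasDerivAt_exp_neg_two_mul (t : ℝ) :
    HasDerivAt (fun t : ℝ => Real.exp (-2 * t)) (-2 * Real.exp (-2 * t)) t := by
  simpa [mul_comm] using ((hasDerivAt_id t).const_mul (-2)).exp

namespace ComparisonPair

variable {n : ℕ} {H : En n → En n → ℝ} {A B : En n × ℝ → ℝ}

lemma sub_le_of_exp_forcing {a b d : ℝ}
    (P : ComparisonPair H A B (fun q => a * Real.exp (-2 * q.2))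
      fun q => -(b * Real.exp (-2 * q.2)))
    (hab : 0 ≤ a + b) (hinit : ∀ x, A (x, 0) - B (x, 0) ≤ d) (x : En n) {t : ℝ} (ht : 0 ≤ t) :
    A (x, t) - B (x, t) ≤ d + (a + b) / 2 := by
  have hderiv (t : ℝ) : HasDerivAt (fun t => d + (a + b) / 2 * (1 - Real.exp (-2 * t)))
      ((a + b) * Real.exp (-2 * t)) t :=
    ((((hasDerivAt_exp_neg_two_mul t).const_sub 1).const_mul _).const_add d).congr_deriv
      (by ring)
  have key := P.sub_le_barrier (θ := fun t => d + (a + b) / 2 * (1 - Real.exp (-2 * t)))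
    (by fun_prop) (by simpa using hinit)
    (fun x t _ _ => by rw [(hderiv t).deriv]; linarith) x ht
  have hexp : 0 ≤ (a + b) / 2 * Real.exp (-2 * t) := by positivity
  linarith

lemma sub_le_mul_exp_of_coupled {C : ℝ}
    (P : ComparisonPair H A B (fun q => B q - A q) fun q => A q - B q)
    (hinit : ∀ x, A (x, 0) - B (x, 0) ≤ C) (x : En n) {t : ℝ} (ht : 0 ≤ t) :
    A (x, t) - B (x, t) ≤ C * Real.exp (-2 * t) := by
  have hderiv (t : ℝ) : HasDerivAt (fun t => C * Real.exp (-2 * t))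
      (-2 * (C * Real.exp (-2 * t))) t :=
    ((hasDerivAt_exp_neg_two_mul t).const_mul C).congr_deriv (by ring)
  exact P.sub_le_barrier (θ := fun t => C * Real.exp (-2 * t)) (by fun_prop)
    (by simpa using hinit) (fun x t _ h => by rw [(hderiv t).deriv]; linarith) x ht

end ComparisonPair

/-! ### Almost solutions and their asymptotic regularity -/

/-- `u` solves `∂ₜ u + H(x, Du) = 0` up to an error bounded by `C e^{-2t}`. Each component of a
solution of the system has this property, because `u₁ - u₂` decays like `e^{-2t}`. -/
structure AlmostSolution {n : ℕ} (H : En n → En n → ℝ) (u : En n × ℝ → ℝ) (C : ℝ) : Prop where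
  continuous_hamiltonian : Continuous fun z : En n × En n => H z.1 z.2
  coercive : Coercive H
  continuous : Continuous u
  periodic : ZPeriodicST u
  error_nonneg : 0 ≤ C
  sub : ForcedSub H u fun q => C * Real.exp (-2 * q.2)
  super : ForcedSuper H u fun q => -(C * Real.exp (-2 * q.2))

/-- The flow `s ↦ u(·, s)` is nonexpansive for the one-sided sup-distance, up to an error that
vanishes for large times. -/
def AsymptNonexpansive {n : ℕ} (u : En n × ℝ → ℝ) : Prop :=
  ∀ ε > 0, ∃ S, 0 ≤ S ∧ ∀ s₁ s₂ d, S ≤ s₁ → S ≤ s₂ → (∀ x, u (x, s₁) - u (x, s₂) ≤ d) →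
    ∀ x t, 0 ≤ t → u (x, s₁ + t) - u (x, s₂ + t) ≤ d + ε

/-- The functions `u(·, t)` are uniformly equicontinuous in space, up to an error that vanishes
for large times. -/
def AsymptEquicontinuous {n : ℕ} (u : En n × ℝ → ℝ) : Prop :=
  ∀ ε > 0, ∃ ρ S, 0 < ρ ∧ 0 ≤ S ∧ ∀ x y t, S ≤ t → ‖x - y‖ ≤ ρ → u (x, t) - u (y, t) ≤ ε

lemma exists_forall_mul_exp_le (C : ℝ) {ε : ℝ} (hε : 0 < ε) :
    ∃ S, 0 ≤ S ∧ ∀ s, S ≤ s → C * Real.exp (-2 * s) ≤ ε := by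
  have hlim : Tendsto (fun s : ℝ => C * Real.exp (-2 * s)) atTop (𝓝 (C * 0)) :=
    (Real.tendsto_exp_atBot.comp (tendsto_id.const_mul_atTop_of_neg (by norm_num))).const_mul C
  rw [mul_zero] at hlim
  obtain ⟨S, hS⟩ := eventually_atTop.1 (hlim.eventually (ge_mem_nhds hε))
  exact ⟨max S 0, le_max_right _ _, fun s hs => hS s ((le_max_left _ _).trans hs)⟩

namespace AlmostSolution

variable {n : ℕ} {H : En n → En n → ℝ} {u : En n × ℝ → ℝ} {w : En n → ℝ} {C : ℝ}

lemma exists_abs_le (hu : AlmostSolution H u C) (hw : SingleSolution H w 0)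
    (hper : ZPeriodic w) : ∃ M, ∀ x t, 0 ≤ t → |u (x, t)| ≤ M := by
  obtain ⟨hwcont, hwsub, hwsuper⟩ := hw
  obtain ⟨m, hm⟩ := hper.exists_abs_le hwcont
  obtain ⟨m₀, hm₀⟩ := hu.periodic.exists_abs_le hu.continuous 0
  have hinit (x : En n) : |u (x, 0) - w x| ≤ m₀ + m :=
    (abs_sub _ _).trans (add_le_add (hm₀ x 0 ⟨le_rfl, le_rfl⟩) (hm x))
  have upper : ComparisonPair H u (fun q => w q.1) (fun q => C * Real.exp (-2 * q.2))
      fun q => -(0 * Real.exp (-2 * q.2)) :=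
    ⟨hu.continuous_hamiltonian, hu.coercive, hu.continuous, by fun_prop, by fun_prop,
      by fun_prop, hu.periodic, fun x k _ => hper x k, hu.sub, hwsuper.forcedSuper.mono (by simp)⟩
  have lower : ComparisonPair H (fun q => w q.1) u (fun q => 0 * Real.exp (-2 * q.2))
      fun q => -(C * Real.exp (-2 * q.2)) :=
    ⟨hu.continuous_hamiltonian, hu.coercive, by fun_prop, hu.continuous, by fun_prop,
      by fun_prop, fun x k _ => hper x k, hu.periodic, hwsub.forcedSub.mono (by simp), hu.super⟩
  refine ⟨m₀ + 2 * m + C / 2, fun x t ht => abs_le.2 ⟨?_, ?_⟩⟩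
  · have := lower.sub_le_of_exp_forcing (d := m₀ + m) (by linarith [hu.error_nonneg])
      (fun x => by linarith [(abs_le.1 (hinit x)).1]) x ht
    linarith [(abs_le.1 (hm x)).1]
  · have := upper.sub_le_of_exp_forcing (by linarith [hu.error_nonneg])
      (fun x => (abs_le.1 (hinit x)).2) x ht
    linarith [(abs_le.1 (hm x)).2]

lemma comparisonPair_translate (hu : AlmostSolution H u C) {s₁ s₂ : ℝ} (h₁ : 0 ≤ s₁)
    (h₂ : 0 ≤ s₂) : ComparisonPair H (fun q => u (q.1, q.2 + s₁)) (fun q => u (q.1, q.2 + s₂))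
      (fun q => C * Real.exp (-2 * s₁) * Real.exp (-2 * q.2))
      fun q => -(C * Real.exp (-2 * s₂) * Real.exp (-2 * q.2)) := by
  have hcont := hu.continuous
  have hshift (s t : ℝ) :
      C * Real.exp (-2 * (t + s)) = C * Real.exp (-2 * s) * Real.exp (-2 * t) := by
    rw [mul_assoc, ← Real.exp_add]
    ring_nf
  exact ⟨hu.continuous_hamiltonian, hu.coercive, by fun_prop, by fun_prop, by fun_prop,
    by fun_prop, fun x k _ => hu.periodic x k _, fun x k _ => hu.periodic x k _,
    (hu.sub.translate h₁).mono fun _ t _ => (hshift s₁ t).le,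
    (hu.super.translate h₂).mono fun _ t _ => neg_le_neg (hshift s₂ t).le⟩

theorem asymptNonexpansive (hu : AlmostSolution H u C) : AsymptNonexpansive u := by
  intro ε hε
  obtain ⟨S, hS, hexp⟩ := exists_forall_mul_exp_le C hε
  refine ⟨S, hS, fun s₁ s₂ d h₁ h₂ hd x t ht => ?_⟩
  have hC := hu.error_nonneg
  have key := (hu.comparisonPair_translate (hS.trans h₁) (hS.trans h₂)).sub_le_of_exp_forcing
    (by positivity) (by simpa using hd) x ht
  rw [add_comm s₁, add_comm s₂]
  linarith [hexp s₁ h₁, hexp s₂ h₂]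

end AlmostSolution

lemma ZPeriodicST.exists_time_modulus_at {n : ℕ} {u : En n × ℝ → ℝ} (hper : ZPeriodicST u)
    (hu : Continuous u) (s : ℝ) {ε : ℝ} (hε : 0 < ε) :
    ∃ δ > 0, ∀ x t, |t - s| ≤ δ → |u (x, t) - u (x, s)| ≤ ε := by
  have hunif := ((isCompact_closedBall (0 : En n) (√n)).prod
    (isCompact_Icc (a := s - 1) (b := s + 1))).uniformContinuousOn_of_continuous hu.continuousOn
  rw [Metric.uniformContinuousOn_iff_le] at hunif
  obtain ⟨δ, hδ, hunif⟩ := hunif ε hε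
  refine ⟨min δ 1, lt_min hδ one_pos, fun x t ht => ?_⟩
  obtain ⟨k, hk⟩ := exists_norm_add_intVec_le x
  have hball : x + intVec n k ∈ Metric.closedBall (0 : En n) (√n) := by simpa using hk
  have htime : t ∈ Icc (s - 1) (s + 1) := by
    have := abs_le.1 (ht.trans (min_le_right _ _))
    constructor <;> linarith
  have hdist : dist (x + intVec n k, t) (x + intVec n k, s) ≤ δ := by
    rw [dist_prod_same_left, Real.dist_eq]
    exact ht.trans (min_le_left _ _)
  have hself : s ∈ Icc (s - 1) (s + 1) := by constructor <;> linarith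
  rw [← hper x k t, ← hper x k s]
  exact hunif _ (mk_mem_prod hball htime) _ (mk_mem_prod hball hself) hdist

lemma AsymptNonexpansive.exists_time_modulus {n : ℕ} {u : En n × ℝ → ℝ}
    (hne : AsymptNonexpansive u) (hper : ZPeriodicST u) (hu : Continuous u) {ε : ℝ}
    (hε : 0 < ε) : ∃ δ S, 0 < δ ∧ 0 ≤ S ∧ ∀ x s t, S ≤ s → S ≤ t → |t - s| ≤ δ →
      u (x, t) - u (x, s) ≤ ε := by
  obtain ⟨S, hS, hne⟩ := hne (ε / 2) (half_pos hε)
  obtain ⟨δ, hδ, hmod⟩ := hper.exists_time_modulus_at hu S (half_pos hε)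
  refine ⟨δ, S, hδ, hS, fun x s t hs ht hst => ?_⟩
  rcases le_total s t with hle | hle
  · rw [abs_of_nonneg (sub_nonneg.2 hle)] at hst
    have key := hne (S + (t - s)) S (ε / 2) (by linarith) le_rfl (fun y => (abs_le.1
      (hmod y (S + (t - s)) (by rwa [add_sub_cancel_left, abs_of_nonneg (by linarith)]))).2)
      x (s - S) (by linarith)
    rw [show S + (t - s) + (s - S) = t by ring, add_sub_cancel] at key
    linarith
  · rw [abs_of_nonpos (sub_nonpos.2 hle)] at hst
    have key := hne S (S + (s - t)) (ε / 2) le_rfl (by linarith) (fun y => by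
      linarith [(abs_le.1 (hmod y (S + (s - t))
        (by rw [add_sub_cancel_left, abs_of_nonneg (by linarith)]; linarith))).1])
      x (t - S) (by linarith)
    rw [show S + (s - t) + (t - S) = s by ring, add_sub_cancel] at key
    linarith

/-- The smoothed cone `L √(τ² + |x - y|²)` with vertex `y`. -/
noncomputable def smoothCone {n : ℕ} (L τ : ℝ) (y x : En n) : ℝ := L * √(τ ^ 2 + ‖x - y‖ ^ 2)

section SmoothCone

variable {n : ℕ} {L τ : ℝ} {x y : En n}

lemma mul_le_smoothCone (hL : 0 ≤ L) : L * τ ≤ smoothCone L τ y x :=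
  mul_le_mul_of_nonneg_left (Real.le_sqrt_of_sq_le (by nlinarith [norm_nonneg (x - y)])) hL

lemma mul_norm_sub_le_smoothCone (hL : 0 ≤ L) : L * ‖x - y‖ ≤ smoothCone L τ y x :=
  mul_le_mul_of_nonneg_left (Real.le_sqrt_of_sq_le (by nlinarith [sq_nonneg τ])) hL

lemma smoothCone_le (hL : 0 ≤ L) (hτ : 0 ≤ τ) : smoothCone L τ y x ≤ L * (τ + ‖x - y‖) :=
  mul_le_mul_of_nonneg_left
    (Real.sqrt_le_iff.2 ⟨by positivity, by nlinarith [norm_nonneg (x - y)]⟩) hL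

lemma contDiff_smoothCone (hτ : 0 < τ) : ContDiff ℝ 1 (smoothCone L τ y) :=
  contDiff_const.mul (ContDiff.sqrt
    (contDiff_const.add ((contDiff_id.sub contDiff_const).norm_sq ℝ)) fun x => by positivity)

lemma hasGradientAt_smoothCone (hτ : 0 < τ) :
    HasGradientAt (smoothCone L τ y) ((L / √(τ ^ 2 + ‖x - y‖ ^ 2)) • (x - y)) x := by
  have hpos : τ ^ 2 + ‖x - y‖ ^ 2 ≠ 0 := by positivity
  rw [hasGradientAt_iff_hasFDerivAt]
  have h : HasFDerivAt (fun x : En n => L * √(τ ^ 2 + ‖x - y‖ ^ 2)) _ x :=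
    (((((hasFDerivAt_id x).sub_const y).norm_sq).const_add (τ ^ 2)).sqrt hpos).const_mul L
  refine h.congr_fderiv ?_
  ext v
  have : √(τ ^ 2 + ‖x - y‖ ^ 2) ≠ 0 := by positivity
  simp only [id_eq, one_div, mul_inv_rev, map_sub, ContinuousLinearMap.comp_id, smul_apply,
    sub_apply, coe_innerSL_apply, nsmul_eq_mul, Nat.cast_ofNat, smul_eq_mul, map_smul,
    InnerProductSpace.toDual_apply_apply]
  field_simp

lemma norm_gradient_smoothCone_ge (hL : 0 ≤ L) (hτ : 0 < τ) (hxy : τ < ‖x - y‖) :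
    L / 2 ≤ ‖(L / √(τ ^ 2 + ‖x - y‖ ^ 2)) • (x - y)‖ := by
  have hsqrt : √(τ ^ 2 + ‖x - y‖ ^ 2) ≤ 2 * ‖x - y‖ :=
    Real.sqrt_le_iff.2 ⟨by positivity, by nlinarith [norm_nonneg (x - y)]⟩
  have hpos : 0 < √(τ ^ 2 + ‖x - y‖ ^ 2) := by positivity
  rw [norm_smul, Real.norm_of_nonneg (by positivity), div_mul_eq_mul_div,
    div_le_div_iff₀ two_pos hpos, mul_assoc, mul_comm ‖x - y‖]
  exact mul_le_mul_of_nonneg_left hsqrt hL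

end SmoothCone

section SpaceModulus

variable {n : ℕ} {H : En n → En n → ℝ} {u f : En n × ℝ → ℝ} {M F δ : ℝ}

lemma exists_isLocalMax_cone (hu : Continuous u) (hM : ∀ x t, 0 ≤ t → |u (x, t)| ≤ M)
    {N L τ t₀ : ℝ} (hN : 0 < N) (hNδ : N * δ ^ 2 = 2 * M + 1) (hL : 0 < L) (hτ : 0 < τ)
    (hδ : 0 < δ) (ht₀ : δ < t₀) (x y : En n) :
    ∃ z t, |t - t₀| < δ ∧
      IsLocalMax (fun q => u q - (N * (q.2 - t₀) ^ 2 + smoothCone L τ y q.1)) (z, t) ∧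
      u (x, t₀) - smoothCone L τ y x ≤ u (z, t) - (N * (t - t₀) ^ 2 + smoothCone L τ y z) := by
  have hMnonneg : 0 ≤ M := (abs_nonneg _).trans (hM 0 0 le_rfl)
  set R := τ + (2 * M + 1) / L + ‖x - y‖
  have hLR : L * R = L * τ + (2 * M + 1) + L * ‖x - y‖ := by simp only [R]; field_simp
  have hcone := (contDiff_smoothCone (L := L) (y := y) hτ).continuous
  obtain ⟨z, t, _, ht, hmax⟩ := exists_isMaxOn_cylinder (r := R) (δ := δ)
    (Φ := fun q => u q - (N * (q.2 - t₀) ^ 2 + smoothCone L τ y q.1)) (by fun_prop) y t₀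
    (by positivity) hδ.le
  have hself : |t₀ - t₀| ≤ δ := by rw [sub_self, abs_zero]; exact hδ.le
  have hvertex := hmax y t₀ (by rw [dist_self]; positivity) hself
  have hx := hmax x t₀ (by rw [dist_eq_norm]; exact le_add_of_nonneg_left (by positivity)) hself
  have hvertex_val : smoothCone L τ y y ≤ L * τ := by
    simpa using smoothCone_le (x := y) (y := y) hL.le hτ.le
  simp only [sub_self, ne_eq, OfNat.ofNat_ne_zero, not_false_eq_true, zero_pow, mul_zero,
    zero_add] at hvertex hx
  have hy_bound := abs_le.1 (hM y t₀ (by linarith))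
  have hz_bound := abs_le.1 (hM z t (by linarith [(abs_le.1 ht).1]))
  have htime : |t - t₀| < δ := by
    refine abs_lt_of_sq_lt_sq (lt_of_mul_lt_mul_left ?_ hN.le) hδ.le
    linarith [mul_le_smoothCone (x := z) (y := y) (τ := τ) hL.le]
  have hspace : dist z y < R := by
    rw [dist_eq_norm]
    refine lt_of_mul_lt_mul_left ?_ hL.le
    have : 0 ≤ N * (t - t₀) ^ 2 := by positivity
    have : 0 ≤ L * ‖x - y‖ := by positivity
    linarith [mul_norm_sub_le_smoothCone (x := z) (y := y) (τ := τ) hL.le]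
  exact ⟨z, t, htime, isLocalMax_of_cylinder hspace htime hmax, hx⟩

lemma ForcedSub.exists_slope_bound (hsub : ForcedSub H u f) (hcoer : Coercive H)
    (hu : Continuous u) (hf : ∀ x t, 0 < t → f (x, t) ≤ F)
    (hM : ∀ x t, 0 ≤ t → |u (x, t)| ≤ M) (hδ : 0 < δ) :
    ∃ L > 0, ∀ x y t₀ τ, δ < t₀ → 0 < τ →
      ∃ z t, ‖z - y‖ ≤ τ ∧ |t - t₀| ≤ δ ∧ u (x, t₀) ≤ u (z, t) + L * ‖x - y‖ := by
  have hMnonneg : 0 ≤ M := (abs_nonneg _).trans (hM 0 0 le_rfl)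
  set N := (2 * M + 1) / δ ^ 2
  have hNpos : 0 < N := by positivity
  obtain ⟨r, hr⟩ := hcoer.exists_norm_le (2 * N * δ + F)
  refine ⟨2 * max (r + 1) 1, by positivity, fun x y t₀ τ ht₀ hτ => ?_⟩
  set L := 2 * max (r + 1) 1
  have hLpos : 0 < L := by positivity
  have hLr : r < L / 2 := by simp only [L]; linarith [le_max_left (r + 1) 1]
  obtain ⟨z, t, ht, hmax, hle⟩ := exists_isLocalMax_cone hu hM hNpos
    (div_mul_cancel₀ _ (by positivity)) hLpos hτ hδ ht₀ x y
  have htpos : 0 < t := by linarith [(abs_lt.1 ht).1]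
  have hderiv :
      HasDerivAt (fun s => N * (s - t₀) ^ 2 + smoothCone L τ y z) (2 * N * (t - t₀)) t := by
    refine ((((hasDerivAt_id t).sub_const t₀).pow 2).const_mul N).add_const _ |>.congr_deriv ?_
    simp only [id_eq, Nat.cast_ofNat, Nat.add_one_sub_one, pow_one, mul_one]
    ring
  have hcone := contDiff_smoothCone (L := L) (y := y) hτ
  have hjet := hsub.test (by fun_prop) htpos hmax hderiv
    (hasGradientAt_const_add (N * (t - t₀) ^ 2) (hasGradientAt_smoothCone hτ))
  have hzy : ‖z - y‖ ≤ τ := by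
    by_contra! hlt
    have hslope := hr z _ (by
      linarith [hf z t htpos, mul_le_mul_of_nonneg_left (abs_lt.1 ht).1.le hNpos.le])
    linarith [norm_gradient_smoothCone_ge hLpos.le hτ hlt]
  refine ⟨z, t, hzy, ht.le, ?_⟩
  have : 0 ≤ N * (t - t₀) ^ 2 := by positivity
  linarith [smoothCone_le (x := x) (y := y) hLpos.le hτ.le,
    mul_le_smoothCone (x := z) (y := y) (τ := τ) hLpos.le]

lemma exists_space_modulus_at (hu : Continuous u) (y : En n) (t₀ δ : ℝ) {ε : ℝ} (hε : 0 < ε) :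
    ∃ τ > 0, ∀ z t, ‖z - y‖ ≤ τ → |t - t₀| ≤ δ → u (z, t) - u (y, t) ≤ ε := by
  have hunif := ((isCompact_closedBall y 1).prod
    (isCompact_Icc (a := t₀ - δ) (b := t₀ + δ))).uniformContinuousOn_of_continuous hu.continuousOn
  rw [Metric.uniformContinuousOn_iff_le] at hunif
  obtain ⟨τ, hτ, hunif⟩ := hunif ε hε
  refine ⟨min τ 1, lt_min hτ one_pos, fun z t hz ht => ?_⟩
  rw [← dist_eq_norm] at hz
  have htime : t ∈ Icc (t₀ - δ) (t₀ + δ) := by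
    constructor <;> linarith [(abs_le.1 ht).1, (abs_le.1 ht).2]
  have hdist : dist (z, t) (y, t) ≤ τ := by
    rw [dist_prod_same_right]
    exact hz.trans (min_le_left _ _)
  exact (le_abs_self _).trans (hunif _ (mk_mem_prod (hz.trans (min_le_right _ _)) htime) _
    (mk_mem_prod (Metric.mem_closedBall_self zero_le_one) htime) hdist)

end SpaceModulus

theorem AlmostSolution.asymptEquicontinuous {n : ℕ} {H : En n → En n → ℝ} {u : En n × ℝ → ℝ}
    {C M : ℝ} (hu : AlmostSolution H u C) (hM : ∀ x t, 0 ≤ t → |u (x, t)| ≤ M) :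
    AsymptEquicontinuous u := by
  intro ε hε
  obtain ⟨δ, S, hδ, hS, htime⟩ :=
    hu.asymptNonexpansive.exists_time_modulus hu.periodic hu.continuous (half_pos hε)
  have herror (_ : En n) (t : ℝ) (ht : 0 < t) : C * Real.exp (-2 * t) ≤ C :=
    mul_le_of_le_one_right hu.error_nonneg (Real.exp_le_one_iff.2 (by linarith))
  obtain ⟨L, hL, hslope⟩ := hu.sub.exists_slope_bound hu.coercive hu.continuous herror hM hδ
  refine ⟨ε / (4 * L), S + δ + 1, by positivity, by linarith, fun x y t₀ ht₀ hxy => ?_⟩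
  obtain ⟨τ, hτ, hspace⟩ := exists_space_modulus_at hu.continuous y t₀ δ (ε := ε / 4)
    (by positivity)
  obtain ⟨z, t, hz, ht, hle⟩ := hslope x y t₀ τ (by linarith) hτ
  have hLxy : L * ‖x - y‖ ≤ ε / 4 :=
    (mul_le_mul_of_nonneg_left hxy hL.le).trans_eq (by field_simp)
  linarith [hspace z t hz ht, htime y t₀ t (by linarith) (by linarith [(abs_le.1 ht).1]) ht]

/-! ### Asymptotic monotonicity in time -/

/-- Up to errors that vanish for large initial times, and up to an arbitrarily small linear
drift, `u` is nondecreasing in time. -/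
def AsymptMonotone {n : ℕ} (u : En n × ℝ → ℝ) : Prop :=
  ∀ η > 0, ∀ ε > 0, ∃ S, 0 ≤ S ∧ ∀ x s t, S ≤ s → s ≤ t →
    u (x, s) - u (x, t) ≤ ε + η * (t - s)

/-- The solution `μ` of the logistic equation `μ' = κ μ (1 - μ)` with `μ(S) = 1 / K`. -/
noncomputable def logistic (K κ S s : ℝ) : ℝ := (1 + (K - 1) * Real.exp (-κ * (s - S)))⁻¹

section Logistic

variable {K κ S s : ℝ}

lemma one_lt_inv_logistic (hK : 1 < K) : 1 < 1 + (K - 1) * Real.exp (-κ * (s - S)) :=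
  lt_add_of_pos_right 1 (mul_pos (sub_pos.2 hK) (Real.exp_pos _))

lemma logistic_pos (hK : 1 < K) : 0 < logistic K κ S s :=
  inv_pos.2 (one_pos.trans (one_lt_inv_logistic hK))

lemma logistic_lt_one (hK : 1 < K) : logistic K κ S s < 1 :=
  inv_lt_one_of_one_lt₀ (one_lt_inv_logistic hK)

lemma logistic_self (K κ S : ℝ) : logistic K κ S S = K⁻¹ := by simp [logistic]

lemma contDiff_logistic (hK : 1 < K) : ContDiff ℝ 1 (logistic K κ S) :=
  ContDiff.inv (by fun_prop) fun _ => (one_pos.trans (one_lt_inv_logistic hK)).ne'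

lemma one_sub_logistic (hK : 1 < K) :
    1 - logistic K κ S s = (K - 1) * Real.exp (-κ * (s - S)) * logistic K κ S s := by
  have hden := (one_pos.trans (one_lt_inv_logistic (κ := κ) (S := S) (s := s) hK)).ne'
  rw [logistic]
  linear_combination -mul_inv_cancel₀ hden

lemma deriv_logistic (hK : 1 < K) :
    deriv (logistic K κ S) s = κ * logistic K κ S s * (1 - logistic K κ S s) := by
  have hden := (one_pos.trans (one_lt_inv_logistic (κ := κ) (S := S) (s := s) hK)).ne'
  have hexponent : HasDerivAt (fun s : ℝ => -κ * (s - S)) (-κ) s := by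
    simpa using ((hasDerivAt_id s).sub_const S).const_mul (-κ)
  have hderiv : deriv (logistic K κ S) s = _ :=
    (((hexponent.exp.const_mul (K - 1)).const_add 1).fun_inv hden).deriv
  rw [hderiv, one_sub_logistic hK, logistic]
  field_simp

lemma one_sub_logistic_le (hK : 1 < K) :
    1 - logistic K κ S s ≤ K * Real.exp (-κ * (s - S)) := by
  rw [one_sub_logistic hK]
  have hfactor : 0 ≤ (K - 1) * Real.exp (-κ * (s - S)) :=
    mul_nonneg (sub_nonneg.2 hK.le) (Real.exp_pos _).le
  linarith [mul_le_of_le_one_right hfactor (logistic_lt_one (κ := κ) (S := S) (s := s) hK).le,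
    Real.exp_pos (-κ * (s - S))]

lemma exp_div_two_le_one_sub_logistic (hK : 2 ≤ K) (hκ₀ : 0 ≤ κ) (hκ₂ : κ ≤ 2) (hs : S ≤ s) :
    Real.exp (-2 * (s - S)) / 2 ≤ 1 - logistic K κ S s := by
  have hrate : Real.exp (-2 * (s - S)) ≤ Real.exp (-κ * (s - S)) :=
    Real.exp_le_exp.2 (by nlinarith)
  have hle : Real.exp (-κ * (s - S)) ≤ 1 := Real.exp_le_one_iff.2 (by nlinarith)
  have hden := one_lt_inv_logistic (κ := κ) (S := S) (s := s) (by linarith : 1 < K)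
  suffices Real.exp (-κ * (s - S)) / 2 ≤ 1 - logistic K κ S s by linarith
  rw [one_sub_logistic (by linarith), logistic, ← div_eq_mul_inv, le_div_iff₀ (by linarith)]
  have hpos := Real.exp_pos (-κ * (s - S))
  nlinarith [mul_le_of_le_one_right (by linarith : 0 ≤ K - 1) hle]

end Logistic

lemma A8plusAt.le_mul_of_convexCombination {n : ℕ} {H : En n → En n → ℝ} {η ψ μ : ℝ}
    {x p q : En n} (h : A8plusAt H η ψ) (hμ₀ : 0 < μ) (hμ₁ : μ ≤ 1) (hq : H x q ≤ 0)
    (hη : η ≤ H x (μ • p + (1 - μ) • q)) :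
    H x (μ • p + (1 - μ) • q) + ψ * (1 - μ) ≤ μ * H x p := by
  have hcomb : μ • (p - q) + q = μ • p + (1 - μ) • q := by module
  have key := h x (μ • (p - q)) q (hcomb ▸ hη) hq μ hμ₀ hμ₁
  rwa [hcomb, inv_smul_smul₀ hμ₀.ne', sub_add_cancel] at key

lemma SingleSub.sub_const {n : ℕ} {H : En n → En n → ℝ} {w : En n → ℝ} {c : ℝ}
    (hw : SingleSub H w c) (a : ℝ) : SingleSub H (fun x => w x - a) c := fun φ hφ x hmax =>
  hw φ hφ x (hmax.mono fun y hy => by linarith)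

/-- A periodic stationary subsolution `w` below `u`, normalized so that `1 ≤ u - w ≤ K`. -/
structure LowerBarrier {n : ℕ} (H : En n → En n → ℝ) (u : En n × ℝ → ℝ) (w : En n → ℝ) (K : ℝ) :
    Prop where
  continuous : Continuous w
  periodic : ZPeriodic w
  sub : SingleSub H w 0
  one_le_sub : ∀ x t, 0 ≤ t → 1 ≤ u (x, t) - w x
  sub_le : ∀ x t, 0 ≤ t → u (x, t) - w x ≤ K
  two_le : 2 ≤ K

lemma SingleSub.exists_lowerBarrier {n : ℕ} {H : En n → En n → ℝ} {u : En n × ℝ → ℝ}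
    {w : En n → ℝ} {M : ℝ} (hw : SingleSub H w 0) (hcont : Continuous w) (hper : ZPeriodic w)
    (hM : ∀ x t, 0 ≤ t → |u (x, t)| ≤ M) : ∃ w' K, LowerBarrier H u w' K := by
  obtain ⟨m, hm⟩ := hper.exists_abs_le hcont
  have hMnonneg : 0 ≤ M := (abs_nonneg _).trans (hM 0 0 le_rfl)
  have hmnonneg : 0 ≤ m := (abs_nonneg _).trans (hm 0)
  refine ⟨fun x => w x - (M + m + 1), 2 * (M + m) + 2, by fun_prop,
    fun x k => by simp only [hper x k], hw.sub_const _, fun x t ht => ?_, fun x t ht => ?_,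
    by linarith⟩
  · linarith [(abs_le.1 (hM x t ht)).1, (abs_le.1 (hm x)).2]
  · linarith [(abs_le.1 (hM x t ht)).2, (abs_le.1 (hm x)).1]

/-- The times `S ≤ s ≤ t ≤ T`. -/
def timeTriangle (S T : ℝ) : Set (ℝ × ℝ) := {z | S ≤ z.1 ∧ z.1 ≤ z.2 ∧ z.2 ≤ T}

/-- The times `S < s < t < T`. -/
def openTimeTriangle (S T : ℝ) : Set (ℝ × ℝ) := {z | S < z.1 ∧ z.1 < z.2 ∧ z.2 < T}

lemma isCompact_timeTriangle (S T : ℝ) : IsCompact (timeTriangle S T) := by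
  refine ((isCompact_Icc (a := S) (b := T)).prod
    (isCompact_Icc (a := S) (b := T))).of_isClosed_subset ?_ ?_
  · exact (isClosed_le continuous_const continuous_fst).inter
      ((isClosed_le continuous_fst continuous_snd).inter
        (isClosed_le continuous_snd continuous_const))
  · exact fun z ⟨h₁, h₂, h₃⟩ => ⟨⟨h₁, h₂.trans h₃⟩, h₁.trans h₂, h₃⟩

lemma isOpen_openTimeTriangle (S T : ℝ) : IsOpen (openTimeTriangle S T) :=
  (isOpen_lt continuous_const continuous_fst).inter
    ((isOpen_lt continuous_fst continuous_snd).inter (isOpen_lt continuous_snd continuous_const))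

lemma openTimeTriangle_subset (S T : ℝ) : openTimeTriangle S T ⊆ timeTriangle S T :=
  fun _ ⟨h₁, h₂, h₃⟩ => ⟨h₁.le, h₂.le, h₃.le⟩

lemma fderiv_linear_coupling (η σ S s t : ℝ) (v : ℝ × ℝ) :
    fderiv ℝ (fun z : ℝ × ℝ => η * (z.2 - z.1) + σ * (z.1 - S)) (s, t) v =
      η * (v.2 - v.1) + σ * v.1 := by
  have hfst : HasFDerivAt (Prod.fst : ℝ × ℝ → ℝ) (ContinuousLinearMap.fst ℝ ℝ ℝ) (s, t) :=
    hasFDerivAt_fst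
  have h : HasFDerivAt (fun z : ℝ × ℝ => η * (z.2 - z.1) + σ * (z.1 - S)) _ (s, t) :=
    ((hasFDerivAt_snd.sub hfst).const_mul η).add ((hfst.sub_const S).const_mul σ)
  rw [h.fderiv]
  simp

namespace LowerBarrier

variable {n : ℕ} {H : En n → En n → ℝ} {u : En n × ℝ → ℝ} {w : En n → ℝ}
  {C K κ S T η η' σ ψ s t : ℝ} {x p q : En n}

lemma one_lt (hb : LowerBarrier H u w K) : 1 < K := one_lt_two.trans_le hb.two_le

/-- Doubling of `μ(s) (u(x,s) - w(x)) - (u(x,t) - w(x)) - η (t - s) - σ (s - S)`, where `μ` is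
the logistic function. -/
noncomputable def doubling (hb : LowerBarrier H u w K) (hu : AlmostSolution H u C)
    (κ S η σ : ℝ) : Doubling n where
  A := u
  B := u
  w := w
  α := logistic K κ S
  γ s := 1 - logistic K κ S s
  Θ z := η * (z.2 - z.1) + σ * (z.1 - S)
  continuous_A := hu.continuous
  continuous_B := hu.continuous
  continuous_w := hb.continuous
  periodic_A := hu.periodic
  periodic_B := hu.periodic
  periodic_w := hb.periodic
  contDiff_α := contDiff_logistic hb.one_lt
  contDiff_γ := contDiff_const.sub (contDiff_logistic hb.one_lt)
  contDiff_Θ := by fun_prop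
  α_pos _ := logistic_pos hb.one_lt
  γ_nonneg _ := sub_nonneg.2 (logistic_lt_one hb.one_lt).le

lemma diagonal_doubling (hb : LowerBarrier H u w K) (hu : AlmostSolution H u C) (x : En n)
    (κ S η σ s t : ℝ) : (hb.doubling hu κ S η σ).diagonal x s t =
      logistic K κ S s * (u (x, s) - w x) - (u (x, t) - w x)
        - (η * (t - s) + σ * (s - S)) := by
  simp only [Doubling.diagonal, doubling]
  ring

lemma diagonal_doubling_nonpos (hb : LowerBarrier H u w K) (hu : AlmostSolution H u C)
    (hS : 0 ≤ S) (hη : 0 ≤ η) (hσ : 0 ≤ σ) (hηT : K ≤ η * (T - S)) (hσT : K ≤ σ * (T - S))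
    (hst : (s, t) ∈ timeTriangle S T) (hst' : (s, t) ∉ openTimeTriangle S T) :
    (hb.doubling hu κ S η σ).diagonal x s t ≤ 0 := by
  obtain ⟨hSs, hst, htT⟩ : S ≤ s ∧ s ≤ t ∧ t ≤ T := hst
  rw [diagonal_doubling]
  have hs := hb.one_le_sub x s (hS.trans hSs)
  have ht := hb.one_le_sub x t (hS.trans (hSs.trans hst))
  have hsK := hb.sub_le x s (hS.trans hSs)
  have hμ : logistic K κ S s * (u (x, s) - w x) ≤ u (x, s) - w x :=
    mul_le_of_le_one_left (by linarith) (logistic_lt_one hb.one_lt).le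
  have hηst : 0 ≤ η * (t - s) := mul_nonneg hη (sub_nonneg.2 hst)
  have hσs : 0 ≤ σ * (s - S) := mul_nonneg hσ (sub_nonneg.2 hSs)
  rcases hSs.eq_or_lt with rfl | hSs
  · have : logistic K κ S S * (u (x, S) - w x) ≤ 1 := by
      rw [logistic_self, inv_mul_le_iff₀ (by linarith)]
      linarith
    linarith
  rcases hst.eq_or_lt with rfl | hst
  · linarith
  have htT : t = T := htT.antisymm (not_lt.1 fun h => hst' ⟨hSs, hst, h⟩)
  subst htT
  -- `η (t - s) + σ (s - S)` is an average of `η (t - S)` and `σ (t - S)`.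
  have hpenalty : K * (t - S) ≤ (η * (t - s) + σ * (s - S)) * (t - S) := by
    nlinarith [mul_le_mul_of_nonneg_right hηT (sub_nonneg.2 hst.le),
      mul_le_mul_of_nonneg_right hσT (sub_nonneg.2 hSs.le)]
  linarith [le_of_mul_le_mul_right hpenalty (by linarith)]

lemma deriv_logistic_mul_le (hb : LowerBarrier H u w K) (hκ : 0 ≤ κ) (hs : 0 ≤ s)
    (hκK : κ * K ≤ ψ / 2) :
    deriv (logistic K κ S) s * (u (x, s) - w x) ≤ ψ / 2 * (1 - logistic K κ S s) := by
  have hμ₁ := logistic_lt_one (κ := κ) (S := S) (s := s) hb.one_lt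
  have hone_sub : 0 ≤ 1 - logistic K κ S s := sub_nonneg.2 hμ₁.le
  calc deriv (logistic K κ S) s * (u (x, s) - w x)
      = logistic K κ S s * (κ * (u (x, s) - w x) * (1 - logistic K κ S s)) := by
        rw [deriv_logistic hb.one_lt]
        ring
    _ ≤ κ * (u (x, s) - w x) * (1 - logistic K κ S s) :=
        mul_le_of_le_one_left
          (by have := hb.one_le_sub x s hs; exact mul_nonneg (mul_nonneg hκ (by linarith)) hone_sub)
          hμ₁.le
    _ ≤ ψ / 2 * (1 - logistic K κ S s) :=
        mul_le_mul_of_nonneg_right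
          ((mul_le_mul_of_nonneg_left (hb.sub_le x s hs) hκ).trans hκK) hone_sub

lemma error_le (hb : LowerBarrier H u w K) (hψ : 0 ≤ ψ) (hκ₀ : 0 ≤ κ) (hκ₂ : κ ≤ 2)
    (hψS : C * Real.exp (-2 * S) ≤ ψ / 8) (hs : S ≤ s) :
    C * Real.exp (-2 * s) ≤ ψ / 4 * (1 - logistic K κ S s) := by
  calc C * Real.exp (-2 * s) = C * Real.exp (-2 * S) * Real.exp (-2 * (s - S)) := by
        rw [mul_assoc, ← Real.exp_add]
        ring_nf
    _ ≤ ψ / 8 * Real.exp (-2 * (s - S)) := mul_le_mul_of_nonneg_right hψS (Real.exp_pos _).le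
    _ = ψ / 4 * (Real.exp (-2 * (s - S)) / 2) := by ring
    _ ≤ ψ / 4 * (1 - logistic K κ S s) :=
        mul_le_mul_of_nonneg_left
          (exp_div_two_le_one_sub_logistic hb.two_le hκ₀ hκ₂ hs) (by positivity)

lemma not_hasJet_doubling (hb : LowerBarrier H u w K) (hu : AlmostSolution H u C)
    (h8 : A8plusAt H η' ψ) (hη' : η' ≤ η / 2) (hψ : 0 ≤ ψ) (hσ : 0 < σ) (hκ₀ : 0 ≤ κ)
    (hκ₂ : κ ≤ 2) (hκK : κ * K ≤ ψ / 2) (hη : ∀ t, S ≤ t → C * Real.exp (-2 * t) ≤ η / 2)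
    (hψS : C * Real.exp (-2 * S) ≤ ψ / 8) (hS : 0 ≤ S) (hs : S ≤ s) (hst : s ≤ t) :
    ¬ (hb.doubling hu κ S η σ).HasJet H (fun q => C * Real.exp (-2 * q.2))
      (fun q => -(C * Real.exp (-2 * q.2))) x x x s t p q := by
  rintro ⟨hsub, hsuper, hstat⟩
  have hμ₀ := logistic_pos (κ := κ) (S := S) (s := s) hb.one_lt
  have hμ₁ := logistic_lt_one (κ := κ) (S := S) (s := s) hb.one_lt
  simp only [doubling, fderiv_linear_coupling, deriv_const_sub] at hsub hsuper hstat
  have hamiltonian := h8.le_mul_of_convexCombination (p := p) hμ₀ hμ₁.le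
    (hstat (sub_pos.2 hμ₁)) (by linarith [hη t (hs.trans hst)])
  have htime := hb.deriv_logistic_mul_le (S := S) (x := x) hκ₀ (hS.trans hs) hκK
  have herror_s := hb.error_le hψ hκ₀ hκ₂ hψS hs
  have herror_t : C * Real.exp (-2 * t) ≤ C * Real.exp (-2 * s) :=
    mul_le_mul_of_nonneg_left (Real.exp_le_exp.2 (by linarith)) hu.error_nonneg
  have herror : logistic K κ S s * (C * Real.exp (-2 * s)) ≤ C * Real.exp (-2 * s) :=
    mul_le_of_le_one_left (mul_nonneg hu.error_nonneg (Real.exp_pos _).le) hμ₁.le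
  linarith

lemma logistic_mul_sub_le (hb : LowerBarrier H u w K) (hu : AlmostSolution H u C)
    (h8 : A8plusAt H η' ψ) (hη' : η' ≤ η / 2) (hη₀ : 0 < η) (hψ : 0 ≤ ψ) (hκ₀ : 0 ≤ κ)
    (hκ₂ : κ ≤ 2) (hκK : κ * K ≤ ψ / 2) (hη : ∀ t, S ≤ t → C * Real.exp (-2 * t) ≤ η / 2)
    (hψS : C * Real.exp (-2 * S) ≤ ψ / 8) (hS : 0 ≤ S) (hs : S ≤ s) (hst : s ≤ t) (x : En n) :
    logistic K κ S s * (u (x, s) - w x) ≤ u (x, t) - w x + η * (t - s) := by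
  by_contra! hlt
  set gap := logistic K κ S s * (u (x, s) - w x) - (u (x, t) - w x + η * (t - s))
  have hgap : 0 < gap := sub_pos.2 hlt
  obtain ⟨σ, hσ, hσgap⟩ : ∃ σ > 0, σ * (s - S) < gap :=
    ⟨gap / (s - S + 1), div_pos hgap (by linarith), by
      rw [div_mul_eq_mul_div, div_lt_iff₀ (by linarith)]; linarith⟩
  obtain ⟨T, hT⟩ : ∃ T, t ≤ T ∧ K / η + S ≤ T ∧ K / σ + S ≤ T :=
    ⟨max t (max (K / η + S) (K / σ + S)), by simp⟩
  have hηT : K ≤ η * (T - S) := by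
    rw [← div_le_iff₀' hη₀]
    linarith
  have hσT : K ≤ σ * (T - S) := by
    rw [← div_le_iff₀' hσ]
    linarith
  obtain ⟨x', s', t', p, q, -, hst', -, hjet⟩ :=
    (hb.doubling hu κ S η σ).exists_hasJet (m := gap - σ * (s - S))
    hu.continuous_hamiltonian hu.coercive (by fun_prop) (by fun_prop) hu.sub hu.super
    (fun _ _ => hb.sub) (isCompact_timeTriangle S T) (isOpen_openTimeTriangle S T)
    (openTimeTriangle_subset S T)
    (fun a b h => ⟨hS.trans_lt h.1, hS.trans_lt (h.1.trans h.2.1)⟩)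
    ⟨x, s, t, ⟨hs, hst, hT.1⟩, by rw [diagonal_doubling]; linarith⟩
    (fun x s t h h' => (hb.diagonal_doubling_nonpos hu hS hη₀.le hσ.le hηT hσT h h').trans_lt
      (by linarith))
  exact hb.not_hasJet_doubling hu h8 hη' hψ hσ hκ₀ hκ₂ hκK hη hψS hS hst'.1.le hst'.2.1.le hjet

/-- Since `μ(s) → 1`, the key inequality `μ(s) (u(s) - w) ≤ u(t) - w + η (t - s)` becomes
monotonicity. -/
theorem asymptMonotone (hb : LowerBarrier H u w K) (hu : AlmostSolution H u C) {η₀ : ℝ}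
    (hη₀ : 0 < η₀) (h8 : A8plus H η₀) : AsymptMonotone u := by
  intro η hη ε hε
  have hK : 0 < K := by linarith [hb.two_le]
  obtain ⟨ψ, hψ, h8⟩ := h8 (min (η / 2) η₀) (by positivity) (min_le_right _ _)
  obtain ⟨κ, hκ, hκ₂, hκK⟩ : ∃ κ > 0, κ ≤ 2 ∧ κ * K ≤ ψ / 2 :=
    ⟨min 2 (ψ / 2 / K), by positivity, min_le_left _ _,
      (mul_le_mul_of_nonneg_right (min_le_right _ _) hK.le).trans_eq (div_mul_cancel₀ _ hK.ne')⟩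
  obtain ⟨S, hS, hexp⟩ := exists_forall_mul_exp_le C (ε := min (η / 2) (ψ / 8)) (by positivity)
  have hlim : Tendsto (fun s : ℝ => K * Real.exp (-κ * (s - S)) * K) atTop (𝓝 (K * 0 * K)) :=
    ((Real.tendsto_exp_atBot.comp ((tendsto_atTop_add_const_right _ (-S)
      tendsto_id).const_mul_atTop_of_neg (neg_neg_of_pos hκ))).const_mul K).mul_const K
  rw [mul_zero, zero_mul] at hlim
  obtain ⟨S', hS'⟩ := eventually_atTop.1 (hlim.eventually (ge_mem_nhds hε))
  refine ⟨max S S', hS.trans (le_max_left _ _), fun x s t hs hst => ?_⟩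
  have hSs : S ≤ s := (le_max_left _ _).trans hs
  have hkey := hb.logistic_mul_sub_le hu h8 (min_le_left _ _) hη hψ.le hκ.le hκ₂ hκK
    (fun t ht => (hexp t ht).trans (min_le_left _ _)) ((hexp S le_rfl).trans (min_le_right _ _))
    hS hSs hst x
  have hdefect : (1 - logistic K κ S s) * (u (x, s) - w x) ≤ K * Real.exp (-κ * (s - S)) * K :=
    mul_le_mul (one_sub_logistic_le hb.one_lt) (hb.sub_le x s (hS.trans hSs))
      (by linarith [hb.one_le_sub x s (hS.trans hSs)]) (by positivity)
  linarith [hS' s ((le_max_right _ _).trans hs)]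

end LowerBarrier

lemma A8minus.nonneg {n : ℕ} (hn : 1 ≤ n) {H : En n → En n → ℝ}
    (hH : Continuous fun z : En n × En n => H z.1 z.2) (hcoer : Coercive H) {η₀ : ℝ}
    (hη₀ : 0 < η₀) (h8 : A8minus H η₀) (x p : En n) : 0 ≤ H x p := by
  by_contra! hneg
  obtain ⟨ψ, hψ, h8⟩ := h8 (min (-H x p) η₀) (lt_min (neg_pos.2 hneg) hη₀) (min_le_right _ _)
  obtain ⟨r, hr⟩ := hcoer 1
  obtain ⟨q, hq⟩ : ∃ q : En n, 1 ≤ H x q :=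
    ⟨EuclideanSpace.single (⟨0, hn⟩ : Fin n) |r|, hr x _ (by simp [le_abs_self])⟩
  have hnonpos : ∀ᶠ μ : ℝ in atTop, H x (μ⁻¹ • (p - q) + q) ≤ 0 := by
    filter_upwards [eventually_ge_atTop 1] with μ hμ
    have key := h8 x (p - q) q (by rw [sub_add_cancel]; linarith [min_le_left (-H x p) η₀])
      (by linarith) μ hμ
    have hpos : 0 ≤ ψ * (μ - 1) / μ := by
      have : 0 ≤ μ - 1 := sub_nonneg.2 hμ
      positivity
    rw [sub_add_cancel] at key
    exact nonpos_of_mul_nonpos_right (by linarith) (by linarith : 0 < μ)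
  have hcont : Continuous fun a : ℝ => H x (a • (p - q) + q) :=
    hH.comp (by fun_prop : Continuous fun a : ℝ => (x, a • (p - q) + q))
  have hlim : Tendsto (fun μ : ℝ => H x (μ⁻¹ • (p - q) + q)) atTop (𝓝 (H x q)) := by
    simpa [Function.comp_def] using (hcont.tendsto 0).comp tendsto_inv_atTop_zero
  linarith [le_of_tendsto hlim hnonpos]

theorem AlmostSolution.asymptMonotone_neg {n : ℕ} {H : En n → En n → ℝ} {u : En n × ℝ → ℝ}
    {C : ℝ} (hu : AlmostSolution H u C) (hH : ∀ x p, 0 ≤ H x p) : AsymptMonotone (-u) := by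
  intro η hη ε hε
  obtain ⟨S, hS, hexp⟩ := exists_forall_mul_exp_le C hε
  refine ⟨S, hS, fun x s t hs hst => ?_⟩
  have hC := hu.error_nonneg
  have hcont := hu.continuous
  have hfrozen : SingleSuper H (fun x => u (x, s)) 0 := fun _ _ x _ => hH x _
  have hpair := hu.comparisonPair_translate (hS.trans hs) (hS.trans hs)
  have hsuper : ComparisonPair H (fun q => u (q.1, q.2 + s)) (fun q => u (q.1, s))
      (fun q => C * Real.exp (-2 * s) * Real.exp (-2 * q.2))
      fun q => -(0 * Real.exp (-2 * q.2)) :=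
    { hpair with
      continuous_B := by fun_prop
      continuous_g := by fun_prop
      periodic_B := fun x k _ => hu.periodic x k s
      super := hfrozen.forcedSuper.mono (by simp) }
  have key := hsuper.sub_le_of_exp_forcing (d := 0) (by positivity) (by simp) x
    (sub_nonneg.2 hst)
  simp only [sub_add_cancel] at key
  have hdrift : 0 ≤ η * (t - s) := mul_nonneg hη.le (sub_nonneg.2 hst)
  simp only [Pi.neg_apply]
  linarith [hexp s hs]

/-! ### Convergence -/

section Convergence

variable {n : ℕ} {u : En n × ℝ → ℝ} {v : En n → ℝ}

lemma AsymptNonexpansive.neg (hu : AsymptNonexpansive u) : AsymptNonexpansive (-u) := by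
  intro ε hε
  obtain ⟨S, hS, hle⟩ := hu ε hε
  refine ⟨S, hS, fun s₁ s₂ d hs₁ hs₂ hd x t ht => ?_⟩
  simp only [Pi.neg_apply] at hd ⊢
  linarith [hle s₂ s₁ d hs₂ hs₁ (fun y => by linarith [hd y]) x t ht]

lemma AsymptEquicontinuous.neg (hu : AsymptEquicontinuous u) : AsymptEquicontinuous (-u) := by
  intro ε hε
  obtain ⟨ρ, S, hρ, hS, hle⟩ := hu ε hε
  refine ⟨ρ, S, hρ, hS, fun x y t ht hxy => ?_⟩
  have key := hle y x t ht (norm_sub_rev x y ▸ hxy)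
  simp only [Pi.neg_apply]
  linarith

lemma UnifTendsTo.neg (h : UnifTendsTo u v) : UnifTendsTo (-u) (-v) := by
  intro ε hε
  obtain ⟨T, hT⟩ := h ε hε
  refine ⟨T, fun t ht x => ?_⟩
  rw [Pi.neg_apply, Pi.neg_apply, ← neg_sub', abs_neg]
  exact hT t ht x

lemma UnifTendsTo.tendstoUniformly (h : UnifTendsTo u v) :
    TendstoUniformly (fun (t : ℝ) x => u (x, t)) v atTop := by
  rw [Metric.tendstoUniformly_iff]
  intro ε hε
  obtain ⟨T, hT⟩ := h (ε / 2) (half_pos hε)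
  filter_upwards [eventually_ge_atTop T] with t ht x
  rw [dist_comm, Real.dist_eq]
  linarith [hT t ht x]

lemma UnifTendsTo.continuous (h : UnifTendsTo u v) (hu : Continuous u) : Continuous v :=
  h.tendstoUniformly.continuous (Eventually.of_forall fun t => by fun_prop).frequently

lemma UnifTendsTo.zPeriodic (h : UnifTendsTo u v) (hper : ZPeriodicST u) : ZPeriodic v := by
  intro x k
  refine tendsto_nhds_unique (h.tendstoUniformly.tendsto_at _) ?_
  simpa only [hper x k] using h.tendstoUniformly.tendsto_at x

lemma eventually_forall_abs_sub_le_of_tendsto {ι : Type*} {l : Filter ι} [l.NeBot]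
    {F : ι → En n → ℝ} {G : En n → ℝ} (hper : ∀ i, ZPeriodic (F i))
    (hlim : ∀ x, Tendsto (fun i => F i x) l (𝓝 (G x)))
    (hequi : ∀ ε > 0, ∃ ρ > 0, ∀ᶠ i in l, ∀ x y, ‖x - y‖ ≤ ρ → F i x - F i y ≤ ε)
    {ε : ℝ} (hε : 0 < ε) : ∀ᶠ i in l, ∀ x, |F i x - G x| ≤ ε := by
  have hGper : ZPeriodic G := fun x k =>
    tendsto_nhds_unique (hlim _) (by simpa only [hper _ x k] using hlim x)
  obtain ⟨ρ, hρ, hF⟩ := hequi (ε / 3) (by positivity)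
  have hG : ∀ x y, ‖x - y‖ ≤ ρ → G x - G y ≤ ε / 3 := fun x y hxy =>
    le_of_tendsto ((hlim x).sub (hlim y)) (hF.mono fun i hi => hi x y hxy)
  obtain ⟨net, -, hfin, hcover⟩ :=
    (isCompact_closedBall (0 : En n) (√n)).finite_cover_balls hρ
  have hnet : ∀ᶠ i in l, ∀ y ∈ net, |F i y - G y| ≤ ε / 3 := by
    refine (eventually_all_finite hfin).2 fun y _ => ?_
    exact (hlim y).eventually (Metric.closedBall_mem_nhds _ (show 0 < ε / 3 by positivity))
  filter_upwards [hF, hnet] with i hFi hneti x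
  obtain ⟨k, hk⟩ := exists_norm_add_intVec_le x
  rw [← hper i x k, ← hGper x k]
  obtain ⟨y, hy, hxy⟩ := mem_iUnion₂.1 (hcover (mem_closedBall_zero_iff.2 hk))
  have hxy : ‖x + intVec n k - y‖ ≤ ρ := (mem_ball_iff_norm.1 hxy).le
  have hyx : ‖y - (x + intVec n k)‖ ≤ ρ := norm_sub_rev _ y ▸ hxy
  have hnety := abs_le.1 (hneti y hy)
  refine abs_le.2 ⟨?_, ?_⟩ <;>
    linarith [hFi _ _ hxy, hFi _ _ hyx, hG _ _ hxy, hG _ _ hyx]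

end Convergence

/-- The functions `U h` are the limits along `l` of the time translates `u(·, k + h)`, `k → ∞`.
With `l` an ultrafilter they exist for every bounded `u`, without extracting subsequences. -/
structure IsTranslateLimit {n : ℕ} (u : En n × ℝ → ℝ) (l : Filter ℝ) (U : ℝ → En n → ℝ) :
    Prop where
  le_atTop : l ≤ atTop
  tendsto : ∀ h x, Tendsto (fun k => u (x, k + h)) l (𝓝 (U h x))

lemma exists_isTranslateLimit {n : ℕ} {u : En n × ℝ → ℝ} {M : ℝ}
    (hM : ∀ x t, 0 ≤ t → |u (x, t)| ≤ M) :
    ∃ (l : Ultrafilter ℝ) (U : ℝ → En n → ℝ), IsTranslateLimit u l U := by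
  let l : Ultrafilter ℝ := Ultrafilter.of atTop
  have hl : (l : Filter ℝ) ≤ atTop := Ultrafilter.of_le _
  have hlim : ∀ h x, ∃ y, Tendsto (fun k => u (x, k + h)) l (𝓝 y) := by
    intro h x
    obtain ⟨y, -, hy⟩ := exists_tendsto_ultrafilter_of_norm_le l (u := fun k => u (x, k + h))
      (R := M) (hl ((eventually_ge_atTop (-h)).mono fun k hk => hM x _ (by linarith)))
    exact ⟨y, hy⟩
  choose U hU using hlim
  exact ⟨l, U, hl, hU⟩

namespace IsTranslateLimit

variable {n : ℕ} {u : En n × ℝ → ℝ} {l : Filter ℝ} {U : ℝ → En n → ℝ} {v : En n → ℝ}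

lemma eventually_le_add (hU : IsTranslateLimit u l U) (S h : ℝ) : ∀ᶠ k in l, S ≤ k + h :=
  hU.le_atTop ((eventually_ge_atTop (S - h)).mono fun _ hk => by linarith)

variable [l.NeBot]

lemma zPeriodic (hU : IsTranslateLimit u l U) (hper : ZPeriodicST u) (h : ℝ) :
    ZPeriodic (U h) := fun x k =>
  tendsto_nhds_unique (hU.tendsto h _) (by simpa only [hper x k] using hU.tendsto h x)

lemma monotone (hU : IsTranslateLimit u l U) (hm : AsymptMonotone u) (x : En n) :
    Monotone fun h => U h x := by
  intro h h' hh
  have hlength : 0 < h' - h + 1 := by linarith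
  refine le_of_forall_pos_le_add fun ε hε => ?_
  obtain ⟨S, -, hS⟩ := hm (ε / 2 / (h' - h + 1)) (by positivity) (ε / 2) (by positivity)
  have hdiff : U h x - U h' x ≤ ε / 2 + ε / 2 / (h' - h + 1) * (h' - h) := by
    refine le_of_tendsto ((hU.tendsto h x).sub (hU.tendsto h' x)) ?_
    filter_upwards [hU.eventually_le_add S h] with k hk
    simpa only [add_sub_add_left_eq_sub] using hS x (k + h) (k + h') hk (by linarith)
  have hdrift : ε / 2 / (h' - h + 1) * (h' - h) ≤ ε / 2 := by
    rw [div_mul_eq_mul_div, div_le_iff₀ hlength]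
    nlinarith
  linarith

lemma exists_tendsto (hU : IsTranslateLimit u l U) {M : ℝ}
    (hM : ∀ x t, 0 ≤ t → |u (x, t)| ≤ M) (hm : AsymptMonotone u) :
    ∃ v : En n → ℝ, ∀ x, Tendsto (fun h => U h x) atTop (𝓝 (v x)) := by
  have hbdd : ∀ x, BddAbove (range fun h => U h x) := by
    refine fun x => ⟨M, ?_⟩
    rintro _ ⟨h, rfl⟩
    exact le_of_tendsto (hU.tendsto h x)
      ((hU.eventually_le_add 0 h).mono fun k hk => le_of_abs_le (hM x _ hk))
  exact ⟨fun x => ⨆ h, U h x, fun x => tendsto_atTop_ciSup (hU.monotone hm x) (hbdd x)⟩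

lemma exists_space_modulus (hU : IsTranslateLimit u l U) (hequi : AsymptEquicontinuous u)
    {ε : ℝ} (hε : 0 < ε) : ∃ ρ > 0, ∀ h x y, ‖x - y‖ ≤ ρ → U h x - U h y ≤ ε := by
  obtain ⟨ρ, S, hρ, -, hle⟩ := hequi ε hε
  exact ⟨ρ, hρ, fun h x y hxy => le_of_tendsto ((hU.tendsto h x).sub (hU.tendsto h y))
    ((hU.eventually_le_add S h).mono fun k hk => hle x y _ hk hxy)⟩

lemma eventually_forall_abs_sub_le (hU : IsTranslateLimit u l U) (hper : ZPeriodicST u)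
    (hequi : AsymptEquicontinuous u) (h : ℝ) {ε : ℝ} (hε : 0 < ε) :
    ∀ᶠ k in l, ∀ x, |u (x, k + h) - U h x| ≤ ε := by
  refine eventually_forall_abs_sub_le_of_tendsto (F := fun k x => u (x, k + h))
    (fun k x j => hper x j _) (hU.tendsto h) (fun δ hδ => ?_) hε
  obtain ⟨ρ, S, hρ, -, hle⟩ := hequi δ hδ
  exact ⟨ρ, hρ, (hU.eventually_le_add S h).mono fun k hk x y hxy => hle x y _ hk hxy⟩

lemma exists_forall_abs_sub_le (hU : IsTranslateLimit u l U) (hper : ZPeriodicST u)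
    (hne : AsymptNonexpansive u) (hequi : AsymptEquicontinuous u) (h : ℝ) {ε : ℝ} (hε : 0 < ε) :
    ∃ s, ∀ x τ, 0 ≤ τ → |u (x, s + τ) - U (h + τ) x| ≤ ε := by
  obtain ⟨S, -, hS⟩ := hne (ε / 2) (by positivity)
  have hclose := (hU.eventually_forall_abs_sub_le hper hequi h
    (show 0 < ε / 4 by positivity)).and (hU.eventually_le_add S h)
  obtain ⟨k, hk, hSk⟩ := hclose.exists
  refine ⟨k + h, fun x τ hτ => ?_⟩
  refine le_of_tendsto (tendsto_const_nhds.sub (hU.tendsto (h + τ) x)).abs ?_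
  filter_upwards [hclose] with k' ⟨hk', hSk'⟩
  have hforward := hS (k + h) (k' + h) (ε / 2) hSk hSk'
    (fun y => by linarith [(abs_le.1 (hk y)).2, (abs_le.1 (hk' y)).1]) x τ hτ
  have hbackward := hS (k' + h) (k + h) (ε / 2) hSk' hSk
    (fun y => by linarith [(abs_le.1 (hk y)).1, (abs_le.1 (hk' y)).2]) x τ hτ
  rw [← add_assoc]
  exact abs_le.2 ⟨by linarith, by linarith⟩

/-- The orbit stays close to its limiting orbit `U`, which converges by monotonicity. -/
lemma unifTendsTo (hU : IsTranslateLimit u l U) (hper : ZPeriodicST u)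
    (hne : AsymptNonexpansive u) (hequi : AsymptEquicontinuous u)
    (hlim : ∀ x, Tendsto (fun h => U h x) atTop (𝓝 (v x))) : UnifTendsTo u v := by
  intro ε hε
  have hunif : ∀ᶠ h in atTop, ∀ x, |U h x - v x| ≤ ε / 2 := by
    refine eventually_forall_abs_sub_le_of_tendsto (hU.zPeriodic hper) hlim (fun δ hδ => ?_)
      (by positivity)
    obtain ⟨ρ, hρ, hle⟩ := hU.exists_space_modulus hequi hδ
    exact ⟨ρ, hρ, Eventually.of_forall hle⟩
  obtain ⟨h, hh⟩ := eventually_atTop.1 hunif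
  obtain ⟨s, hs⟩ := hU.exists_forall_abs_sub_le hper hne hequi h (show 0 < ε / 2 by positivity)
  refine ⟨s, fun t ht x => ?_⟩
  have hτ : 0 ≤ t - s := sub_nonneg.2 ht
  have horbit := hs x (t - s) hτ
  rw [add_sub_cancel] at horbit
  linarith [abs_sub_le (u (x, t)) (U (h + (t - s)) x) (v x), hh (h + (t - s)) (by linarith) x]

end IsTranslateLimit

theorem AsymptMonotone.exists_unifTendsTo {n : ℕ} {u : En n × ℝ → ℝ} {M : ℝ}
    (hm : AsymptMonotone u) (hper : ZPeriodicST u) (hM : ∀ x t, 0 ≤ t → |u (x, t)| ≤ M)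
    (hne : AsymptNonexpansive u) (hequi : AsymptEquicontinuous u) :
    ∃ v : En n → ℝ, UnifTendsTo u v := by
  obtain ⟨l, U, hU⟩ := exists_isTranslateLimit hM
  obtain ⟨v, hv⟩ := hU.exists_tendsto hM hm
  exact ⟨v, hU.unifTendsTo hper hne hequi hv⟩

theorem AlmostSolution.exists_unifTendsTo {n : ℕ} (hn : 1 ≤ n) {H : En n → En n → ℝ}
    {u : En n × ℝ → ℝ} {w : En n → ℝ} {C η₀ : ℝ} (hu : AlmostSolution H u C)
    (hw : SingleSolution H w 0) (hwper : ZPeriodic w) (hη₀ : 0 < η₀)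
    (h8 : A8plus H η₀ ∨ A8minus H η₀) : ∃ v : En n → ℝ, UnifTendsTo u v := by
  obtain ⟨M, hM⟩ := hu.exists_abs_le hw hwper
  have hne := hu.asymptNonexpansive
  have hequi := hu.asymptEquicontinuous hM
  rcases h8 with h8 | h8
  · obtain ⟨w', K, hb⟩ := hw.2.1.exists_lowerBarrier hw.1 hwper hM
    exact (hb.asymptMonotone hu hη₀ h8).exists_unifTendsTo hu.periodic hM hne hequi
  · have hH := h8.nonneg hn hu.continuous_hamiltonian hu.coercive hη₀
    obtain ⟨v, hv⟩ := (hu.asymptMonotone_neg hH).exists_unifTendsTo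
      (fun x k t => congrArg Neg.neg (hu.periodic x k t))
      (fun x t ht => (abs_neg (u (x, t))).trans_le (hM x t ht)) hne.neg hequi.neg
    exact ⟨-v, by simpa only [neg_neg] using hv.neg⟩

/-! ### Stability of the limit -/

lemma UnifTendsTo.exists_isLocalMax {n : ℕ} {u : En n × ℝ → ℝ} {v φ : En n → ℝ} {x₀ : En n}
    (huv : UnifTendsTo u v) (hu : Continuous u) (hφ : Continuous φ)
    (hmax : IsLocalMax (fun x => v x - φ x) x₀) (S : ℝ) {δ : ℝ} (hδ : 0 < δ) :
    ∃ z t T, S ≤ t ∧ ‖z - x₀‖ < δ ∧ |t - T| < δ ∧ IsLocalMax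
      (fun q : En n × ℝ => u q - ((q.2 - T) ^ 2 + (φ q.1 + 1 * ‖q.1 - x₀‖ ^ 2))) (z, t) := by
  obtain ⟨r, hr, hmax⟩ := Metric.eventually_nhds_iff.1 hmax
  obtain ⟨ρ, hρ, hρδ, hρr⟩ : ∃ ρ, 0 < ρ ∧ ρ ≤ δ ∧ ρ < r :=
    ⟨min δ (r / 2), by positivity, min_le_left _ _, (min_le_right _ _).trans_lt (half_lt_self hr)⟩
  obtain ⟨T₀, hT₀⟩ := huv (ρ ^ 2 / 4) (by positivity)
  obtain ⟨T, hT₀T, hST⟩ : ∃ T, T₀ ≤ T - ρ ∧ S ≤ T - ρ :=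
    ⟨max T₀ S + ρ, by simp, by simp⟩
  obtain ⟨z, t, hz, ht, hmaxOn⟩ := exists_isMaxOn_cylinder
    (Φ := fun q => u q - ((q.2 - T) ^ 2 + (φ q.1 + 1 * ‖q.1 - x₀‖ ^ 2)))
    (by fun_prop) x₀ T hρ.le hρ.le
  have hlower : T - ρ ≤ t := by linarith [(abs_le.1 ht).1]
  have hsmall : (t - T) ^ 2 + ‖z - x₀‖ ^ 2 < ρ ^ 2 := by
    have hcenter := hmaxOn x₀ T (by simpa using hρ.le) (by simpa using hρ.le)
    simp only [sub_self, norm_zero] at hcenter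
    have hvz := hmax (hz.trans_lt hρr)
    have huz := (abs_le.1 (hT₀ t (by linarith) z)).2
    have hux := (abs_le.1 (hT₀ T (by linarith) x₀)).1
    nlinarith [pow_pos hρ 2]
  have hzρ : ‖z - x₀‖ < ρ := lt_of_pow_lt_pow_left₀ 2 hρ.le (by nlinarith [sq_nonneg (t - T)])
  have htρ : |t - T| < ρ := abs_lt_of_sq_lt_sq (by nlinarith [sq_nonneg ‖z - x₀‖]) hρ.le
  exact ⟨z, t, T, hST.trans hlower, hzρ.trans_le hρδ, htρ.trans_le hρδ,
    isLocalMax_of_cylinder ((dist_eq_norm z x₀).trans_lt hzρ) htρ hmaxOn⟩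

lemma exists_forall_hamiltonian_le {n : ℕ} {H : En n → En n → ℝ} {φ : En n → ℝ}
    (hH : Continuous fun z : En n × En n => H z.1 z.2) (hφ : ContDiff ℝ 1 φ) (x₀ : En n) {ε : ℝ}
    (hε : 0 < ε) :
    ∃ δ > 0, ∀ z s, ‖z - x₀‖ < δ → |s| < δ →
      H x₀ (gradient φ x₀) ≤ 2 * s + H z (gradient φ z + (2 * 1 : ℝ) • (z - x₀)) + ε := by
  have hgrad := continuous_gradient hφ
  have hcont : Continuous fun q : En n × ℝ =>
      2 * q.2 + H q.1 (gradient φ q.1 + (2 * 1 : ℝ) • (q.1 - x₀)) :=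
    (continuous_const.mul continuous_snd).add (hH.comp (show Continuous fun q : En n × ℝ =>
      (q.1, gradient φ q.1 + (2 * 1 : ℝ) • (q.1 - x₀)) by fun_prop))
  obtain ⟨δ, hδ, hnear⟩ := Metric.continuous_iff.1 hcont (x₀, 0) ε hε
  refine ⟨δ, hδ, fun z s hz hs => ?_⟩
  have hdist : dist (z, s) (x₀, (0 : ℝ)) < δ := by
    rw [Prod.dist_eq, dist_eq_norm, Real.dist_eq, sub_zero]
    exact max_lt hz hs
  have hclose := (abs_lt.1 (hnear (z, s) hdist)).1
  simp only [sub_self, smul_zero, add_zero, mul_zero, zero_add] at hclose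
  linarith

lemma ForcedSub.singleSub_of_unifTendsTo {n : ℕ} {H : En n → En n → ℝ} {u f : En n × ℝ → ℝ}
    {v : En n → ℝ} {c : ℝ} (hsub : ForcedSub H u f)
    (hH : Continuous fun z : En n × En n => H z.1 z.2) (hu : Continuous u)
    (hf : ∀ ε > 0, ∃ S, 0 ≤ S ∧ ∀ x t, S ≤ t → f (x, t) ≤ c + ε) (huv : UnifTendsTo u v) :
    SingleSub H v c := by
  intro φ hφ x₀ hmax
  refine le_of_forall_pos_le_add fun ε hε => ?_
  obtain ⟨S, hS, hfS⟩ := hf (ε / 2) (half_pos hε)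
  obtain ⟨δ, hδ, hnear⟩ := exists_forall_hamiltonian_le hH hφ x₀ (half_pos hε)
  obtain ⟨z, t, T, ht, hz, htT, hloc⟩ := huv.exists_isLocalMax hu hφ.continuous hmax (S + 1) hδ
  have hsmooth : ContDiff ℝ 1 fun q : En n × ℝ =>
      (q.2 - T) ^ 2 + (φ q.1 + 1 * ‖q.1 - x₀‖ ^ 2) := by
    have hsq : ContDiff ℝ 1 fun q : En n × ℝ => ‖q.1 - x₀‖ ^ 2 :=
      (contDiff_fst.sub contDiff_const).norm_sq ℝ
    fun_prop
  have htime : HasDerivAt (fun τ : ℝ => (τ - T) ^ 2 + (φ z + 1 * ‖z - x₀‖ ^ 2))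
      (2 * (t - T)) t := by
    simpa using (((hasDerivAt_id t).sub_const T).pow 2).add_const (φ z + 1 * ‖z - x₀‖ ^ 2)
  have hspace := hasGradientAt_const_add ((t - T) ^ 2) (hasGradientAt_add
    (hφ.differentiable one_ne_zero z).hasGradientAt
    (hasGradientAt_const_mul_norm_sub_sq 1 x₀ z))
  have htest := hsub.test hsmooth (by linarith) hloc htime hspace
  calc H x₀ (gradient φ x₀)
      ≤ 2 * (t - T) + H z (gradient φ z + (2 * 1 : ℝ) • (z - x₀)) + ε / 2 := hnear z _ hz htT
    _ ≤ f (z, t) + ε / 2 := by gcongr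
    _ ≤ c + ε := by linarith [hfS z t (by linarith)]

theorem AlmostSolution.singleSolution_of_unifTendsTo {n : ℕ} {H : En n → En n → ℝ}
    {u : En n × ℝ → ℝ} {v : En n → ℝ} {C : ℝ} (hu : AlmostSolution H u C)
    (huv : UnifTendsTo u v) : SingleSolution H v 0 := by
  have hvanish : ∀ ε > 0, ∃ S, 0 ≤ S ∧ ∀ (_ : En n) t, S ≤ t →
      C * Real.exp (-2 * t) ≤ 0 + ε := by
    intro ε hε
    obtain ⟨S, hS, hle⟩ := exists_forall_mul_exp_le C hε
    exact ⟨S, hS, fun _ t ht => by linarith [hle t ht]⟩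
  refine ⟨huv.continuous hu.continuous,
    hu.sub.singleSub_of_unifTendsTo hu.continuous_hamiltonian hu.continuous hvanish huv,
    singleSuper_iff_singleSub_dual.2 ?_⟩
  have hdual : Continuous fun z : En n × En n => dualHamiltonian H z.1 z.2 :=
    (hu.continuous_hamiltonian.comp (continuous_fst.prodMk continuous_snd.neg)).neg
  rw [neg_zero]
  exact (forcedSuper_iff_forcedSub_dual.1 hu.super).singleSub_of_unifTendsTo hdual
    hu.continuous.neg (by simpa only [Pi.neg_apply, neg_neg] using hvanish) huv.neg

/-! ### The coupled system -/

/-- The extension of `u` to negative times by its initial value. It turns a function continuous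
for `t ≥ 0` into a globally continuous one, and changes nothing for `t > 0`. -/
def extendInitial {n : ℕ} (u : En n × ℝ → ℝ) : En n × ℝ → ℝ := fun q => u (q.1, max q.2 0)

section ExtendInitial

variable {n : ℕ} {H : En n → En n → ℝ} {u v : En n × ℝ → ℝ}

lemma extendInitial_of_nonneg (u : En n × ℝ → ℝ) (x : En n) {t : ℝ} (ht : 0 ≤ t) :
    extendInitial u (x, t) = u (x, t) := by
  rw [extendInitial, max_eq_left ht]

lemma continuous_extendInitial (hu : ContinuousOn u {q : En n × ℝ | 0 ≤ q.2}) :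
    Continuous (extendInitial u) :=
  hu.comp_continuous (by fun_prop) fun q => le_max_right q.2 0

lemma ZPeriodicST.extendInitial (hu : ZPeriodicST u) : ZPeriodicST (extendInitial u) :=
  fun x k _ => hu x k _

lemma EvolSubIneq.forcedSub_extendInitial (hu : EvolSubIneq H u v) :
    ForcedSub H (extendInitial u) fun q => extendInitial v q - extendInitial u q :=
  (hu.forcedSub.congr fun x _ ht => (extendInitial_of_nonneg u x ht.le).symm).mono
    fun x t ht => by simp only [extendInitial_of_nonneg _ x ht.le, le_refl]

lemma EvolSuperIneq.forcedSuper_extendInitial (hu : EvolSuperIneq H u v) :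
    ForcedSuper H (extendInitial u) fun q => extendInitial v q - extendInitial u q :=
  (hu.forcedSuper.congr fun x _ ht => (extendInitial_of_nonneg u x ht.le).symm).mono
    fun x t ht => by simp only [extendInitial_of_nonneg _ x ht.le, le_refl]

lemma UnifTendsTo.of_extendInitial {w : En n → ℝ} (h : UnifTendsTo (extendInitial u) w) :
    UnifTendsTo u w := by
  intro ε hε
  obtain ⟨T, hT⟩ := h ε hε
  refine ⟨max T 0, fun t ht x => ?_⟩
  rw [← extendInitial_of_nonneg u x ((le_max_right T 0).trans ht)]
  exact hT t ((le_max_left T 0).trans ht) x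

end ExtendInitial

/-- A continuous periodic solution of the system (C) with a single continuous coercive Hamiltonian,
defined for all times; only positive times are constrained by the equations. -/
structure CoupledSolution {n : ℕ} (H : En n → En n → ℝ) (u v : En n × ℝ → ℝ) : Prop where
  continuous_hamiltonian : Continuous fun z : En n × En n => H z.1 z.2
  coercive : Coercive H
  continuous_left : Continuous u
  continuous_right : Continuous v
  periodic_left : ZPeriodicST u
  periodic_right : ZPeriodicST v
  sub_left : ForcedSub H u fun q => v q - u q
  super_left : ForcedSuper H u fun q => v q - u q
  sub_right : ForcedSub H v fun q => u q - v q
  super_right : ForcedSuper H v fun q => u q - v q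

lemma SysSolution.coupledSolution {n : ℕ} {H : En n → En n → ℝ} {u₀₁ u₀₂ : En n → ℝ}
    {u₁ u₂ : En n × ℝ → ℝ} (hu : SysSolution H H u₀₁ u₀₂ u₁ u₂)
    (hH : Continuous fun z : En n × En n => H z.1 z.2) (hcoer : Coercive H)
    (hper₁ : ZPeriodicST u₁) (hper₂ : ZPeriodicST u₂) :
    CoupledSolution H (extendInitial u₁) (extendInitial u₂) := by
  obtain ⟨hcont₁, hcont₂, ⟨hsub₁, hsub₂⟩, ⟨hsuper₁, hsuper₂⟩, -⟩ := hu
  exact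
    { continuous_hamiltonian := hH
      coercive := hcoer
      continuous_left := continuous_extendInitial hcont₁
      continuous_right := continuous_extendInitial hcont₂
      periodic_left := hper₁.extendInitial
      periodic_right := hper₂.extendInitial
      sub_left := hsub₁.forcedSub_extendInitial
      super_left := hsuper₁.forcedSuper_extendInitial
      sub_right := hsub₂.forcedSub_extendInitial
      super_right := hsuper₂.forcedSuper_extendInitial }

lemma UnifTendsTo.of_abs_sub_le_mul_exp {n : ℕ} {u v : En n × ℝ → ℝ} {w : En n → ℝ} {C : ℝ}
    (hu : UnifTendsTo u w)
    (hdecay : ∀ x t, 0 ≤ t → |u (x, t) - v (x, t)| ≤ C * Real.exp (-2 * t)) :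
    UnifTendsTo v w := by
  intro ε hε
  obtain ⟨T, hT⟩ := hu (ε / 2) (half_pos hε)
  obtain ⟨S, hS, hexp⟩ := exists_forall_mul_exp_le C (half_pos hε)
  refine ⟨max T S, fun t ht x => ?_⟩
  have hTt : T ≤ t := (le_max_left T S).trans ht
  have hSt : S ≤ t := (le_max_right T S).trans ht
  calc |v (x, t) - w x| ≤ |v (x, t) - u (x, t)| + |u (x, t) - w x| := abs_sub_le _ _ _
    _ ≤ C * Real.exp (-2 * t) + |u (x, t) - w x| := by
        rw [abs_sub_comm (v (x, t))]
        gcongr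
        exact hdecay x t (hS.trans hSt)
    _ ≤ ε := by linarith [hT t hTt x, hexp t hSt]

namespace CoupledSolution

variable {n : ℕ} {H : En n → En n → ℝ} {u v : En n × ℝ → ℝ} {w : En n → ℝ} {C : ℝ}

lemma symm (h : CoupledSolution H u v) : CoupledSolution H v u :=
  ⟨h.continuous_hamiltonian, h.coercive, h.continuous_right, h.continuous_left,
    h.periodic_right, h.periodic_left, h.sub_right, h.super_right, h.sub_left, h.super_left⟩

lemma comparisonPair (h : CoupledSolution H u v) :
    ComparisonPair H u v (fun q => v q - u q) fun q => u q - v q :=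
  { continuous_hamiltonian := h.continuous_hamiltonian
    coercive := h.coercive
    continuous_A := h.continuous_left
    continuous_B := h.continuous_right
    continuous_f := h.continuous_right.sub h.continuous_left
    continuous_g := h.continuous_left.sub h.continuous_right
    periodic_A := h.periodic_left
    periodic_B := h.periodic_right
    sub := h.sub_left
    super := h.super_right }

lemma exists_abs_sub_le_mul_exp (h : CoupledSolution H u v) :
    ∃ C, 0 ≤ C ∧ ∀ x t, 0 ≤ t → |u (x, t) - v (x, t)| ≤ C * Real.exp (-2 * t) := by
  have hper : ZPeriodicST (u - v) := fun x k t => by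
    simp only [Pi.sub_apply, h.periodic_left x k, h.periodic_right x k]
  obtain ⟨C, hC⟩ := hper.exists_abs_le (h.continuous_left.sub h.continuous_right) 0
  have hinit : ∀ x, |u (x, 0) - v (x, 0)| ≤ C := fun x => hC x 0 (left_mem_Icc.2 le_rfl)
  refine ⟨C, (abs_nonneg _).trans (hinit 0), fun x t ht => abs_sub_le_iff.2 ⟨?_, ?_⟩⟩
  · exact h.comparisonPair.sub_le_mul_exp_of_coupled (fun y => (abs_sub_le_iff.1 (hinit y)).1) x ht
  · exact h.symm.comparisonPair.sub_le_mul_exp_of_coupled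
      (fun y => (abs_sub_le_iff.1 (hinit y)).2) x ht

lemma almostSolution (h : CoupledSolution H u v) (hC : 0 ≤ C)
    (hdecay : ∀ x t, 0 ≤ t → |u (x, t) - v (x, t)| ≤ C * Real.exp (-2 * t)) :
    AlmostSolution H u C :=
  { continuous_hamiltonian := h.continuous_hamiltonian
    coercive := h.coercive
    continuous := h.continuous_left
    periodic := h.periodic_left
    error_nonneg := hC
    sub := h.sub_left.mono fun x t ht => (abs_sub_le_iff.1 (hdecay x t ht.le)).2
    super := h.super_left.mono fun x t ht => by
      linarith [(abs_sub_le_iff.1 (hdecay x t ht.le)).1] }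

theorem exists_unifTendsTo (h : CoupledSolution H u v) (hn : 1 ≤ n) (hw : SingleSolution H w 0)
    (hwper : ZPeriodic w) {η₀ : ℝ} (hη₀ : 0 < η₀) (h8 : A8plus H η₀ ∨ A8minus H η₀) :
    ∃ v' : En n → ℝ, ZPeriodic v' ∧ SingleSolution H v' 0 ∧ UnifTendsTo u v' ∧
      UnifTendsTo v v' := by
  obtain ⟨C, hC, hdecay⟩ := h.exists_abs_sub_le_mul_exp
  have hu := h.almostSolution hC hdecay
  obtain ⟨v', huv'⟩ := hu.exists_unifTendsTo hn hw hwper hη₀ h8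
  exact ⟨v', huv'.zPeriodic hu.periodic, hu.singleSolution_of_unifTendsTo huv', huv',
    huv'.of_abs_sub_le_mul_exp hdecay⟩

end CoupledSolution

lemma SingleSolution.ergSolution {n : ℕ} {H : En n → En n → ℝ} {v : En n → ℝ} {c : ℝ}
    (hv : SingleSolution H v c) : ErgSolution H H v v c := by
  obtain ⟨hcont, hsub, hsuper⟩ := hv
  have hstatSub : StatSubIneq H 1 v v fun _ => c := fun φ hφ x hmax => by
    simpa using hsub φ hφ x hmax
  have hstatSuper : StatSuperIneq H 1 v v fun _ => c := fun φ hφ x hmin => by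
    simpa using hsuper φ hφ x hmin
  exact ⟨hcont, hcont, ⟨hstatSub, hstatSub⟩, ⟨hstatSuper, hstatSuper⟩⟩

/-- Convergence Result 3 (Theorem 1.3). -/
theorem stmt18 (n : ℕ) (hn : 1 ≤ n) (H : En n → En n → ℝ)
    (hHcont : Continuous fun q : En n × En n => H q.1 q.2)
    (hHper : ZPeriodicH H) (hHcoer : Coercive H)
    (hA8 : ∃ η₀ : ℝ, 0 < η₀ ∧ (A8plus H η₀ ∨ A8minus H η₀))
    (herg : ∃ w : En n → ℝ, IsLip w ∧ ZPeriodic w ∧ SingleSolution H w 0)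
    (u₀₁ u₀₂ : En n → ℝ) (hu₀₁ : Continuous u₀₁) (hu₀₂ : Continuous u₀₂)
    (hu₀₁per : ZPeriodic u₀₁) (hu₀₂per : ZPeriodic u₀₂)
    (u₁ u₂ : En n × ℝ → ℝ) (hu₁per : ZPeriodicST u₁) (hu₂per : ZPeriodicST u₂)
    (hsol : SysSolution H H u₀₁ u₀₂ u₁ u₂) :
    ∃ v : En n → ℝ, ZPeriodic v ∧ ErgSolution H H v v 0 ∧
      UnifTendsTo u₁ v ∧ UnifTendsTo u₂ v := by
  obtain ⟨η₀, hη₀, h8⟩ := hA8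
  obtain ⟨w, -, hwper, hw⟩ := herg
  have hcoupled := hsol.coupledSolution hHcont hHcoer hu₁per hu₂per
  obtain ⟨v, hvper, hv, hlim₁, hlim₂⟩ := hcoupled.exists_unifTendsTo hn hw hwper hη₀ h8
  exact ⟨v, hvper, hv.ergSolution, hlim₁.of_extendInitial, hlim₂.of_extendInitial⟩
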